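/- arXiv:2309.16350 — 2 statements merged into one kernel-verified Lean document; each statement's English description precedes it below -/
import Mathlib

section
/- Intrinsic Hölder space characterization (first part of the main theorem): for any α>0 and any u∈C^α, for every k∈ℕ₀ and multi-indices γ,β∈ℕ₀^d with 0 ≤ ϑk + (1+ϑ)|γ| + |β| < α, the derivative Y^k ∂_v^β ∂_x^γ u exists at every point of ℝ×ℝ^{2d}, belongs to C^{α−ϑk−(1+ϑ)|γ|−|β|}, and satisfies ‖Y^k ∂_v^β ∂_x^γ u‖_{C^{α−ϑk−(1+ϑ)|γ|−|β|}} ≤ ‖u‖_{C^α}. -/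
noncomputable section
open scoped BigOperators ENNReal

/-- Points of the Galilean group `ℝ × ℝ^d × ℝ^d`, written `z = (t, x, v)`. -/
abbrev Pt (d : ℕ) := ℝ × EuclideanSpace ℝ (Fin d) × EuclideanSpace ℝ (Fin d)

variable {d : ℕ}

/-- Flow of the drift field `Y = ⟨v, ∇ₓ⟩ + ∂ₜ`. -/
def flowY (τ : ℝ) (z : Pt d) : Pt d := (z.1 + τ, z.2.1 + τ • z.2.2, z.2.2)

/-- Flow of the field `Z_h = ⟨h, ∇_v⟩`. -/
def flowZ (h : EuclideanSpace ℝ (Fin d)) (τ : ℝ) (z : Pt d) : Pt d :=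
  (z.1, z.2.1, z.2.2 + τ • h)

/-- Flow of the constant field `⟨h, ∇ₓ⟩`. -/
def flowX (h : EuclideanSpace ℝ (Fin d)) (τ : ℝ) (z : Pt d) : Pt d :=
  (z.1, z.2.1 + τ • h, z.2.2)

/-- `u` has a Lie derivative at `z` along the flow `φ`. -/
def HasLieAt (φ : ℝ → Pt d → Pt d) (u : Pt d → ℝ) (z : Pt d) : Prop :=
  DifferentiableAt ℝ (fun τ => u (φ τ z)) 0

/-- Lie derivative along `Y` (junk value if it does not exist). -/
def lieY (u : Pt d → ℝ) (z : Pt d) : ℝ := deriv (fun τ => u (flowY τ z)) 0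

/-- Partial derivative `∂_{v_i}` as a Lie derivative along `Z_i`. -/
def dv (i : Fin d) (u : Pt d → ℝ) (z : Pt d) : ℝ :=
  deriv (fun τ => u (flowZ (EuclideanSpace.single i 1) τ z)) 0

/-- Partial derivative `∂_{x_i}`. -/
def dx (i : Fin d) (u : Pt d → ℝ) (z : Pt d) : ℝ :=
  deriv (fun τ => u (flowX (EuclideanSpace.single i 1) τ z)) 0

/-- The list of indices associated to a multi-index `β` (index `i` repeated `β i` times). -/
def idxList (β : Fin d → ℕ) : List (Fin d) := (List.ofFn fun i => List.replicate (β i) i).flatten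

/-- Iterated application of first-order operators along a list of indices. -/
def derivList (D : Fin d → (Pt d → ℝ) → Pt d → ℝ) : List (Fin d) → (Pt d → ℝ) → Pt d → ℝ
  | [], u => u
  | i :: l, u => D i (derivList D l u)

/-- `∂_v^β u`. -/
def dvPow (β : Fin d → ℕ) (u : Pt d → ℝ) : Pt d → ℝ := derivList dv (idxList β) u

/-- `∂_x^γ u`. -/
def dxPow (γ : Fin d → ℕ) (u : Pt d → ℝ) : Pt d → ℝ := derivList dx (idxList γ) u

/-- All the intermediate derivatives in an iterated derivative exist at every point. -/
def ExistsDList (φ : Fin d → ℝ → Pt d → Pt d) (D : Fin d → (Pt d → ℝ) → Pt d → ℝ) :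
    List (Fin d) → (Pt d → ℝ) → Prop
  | [], _ => True
  | i :: l, u => ExistsDList φ D l u ∧ ∀ z, HasLieAt (φ i) (derivList D l u) z

/-- `∂_v^β u` exists (at every point, at every stage). -/
def ExistsDvPow (β : Fin d → ℕ) (u : Pt d → ℝ) : Prop :=
  ExistsDList (fun i => flowZ (EuclideanSpace.single i 1)) dv (idxList β) u

/-- `∂_x^γ u` exists (at every point, at every stage). -/
def ExistsDxPow (γ : Fin d → ℕ) (u : Pt d → ℝ) : Prop :=
  ExistsDList (fun i => flowX (EuclideanSpace.single i 1)) dx (idxList γ) u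

/-- The iterated Lie derivatives `Y^j u`, `j = 1, …, k`, exist at every point. -/
def ExistsLieYIter (u : Pt d → ℝ) : ℕ → Prop
  | 0 => True
  | k + 1 => ExistsLieYIter u k ∧ ∀ z : Pt d, HasLieAt flowY (lieY^[k] u) z

/-- Hölder seminorm `‖u‖_{C^α_{Z_i}}`. -/
def semiZ (i : Fin d) (α : ℝ) (u : Pt d → ℝ) : ℝ≥0∞ :=
  ⨆ (z : Pt d) (τ : ℝ) (_ : τ ≠ 0),
    ENNReal.ofReal (|u (flowZ (EuclideanSpace.single i 1) τ z) - u z| / |τ| ^ α)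

/-- Hölder seminorm `‖u‖_{C^α_Y}`. -/
def semiY (ϑ α : ℝ) (u : Pt d → ℝ) : ℝ≥0∞ :=
  ⨆ (z : Pt d) (τ : ℝ) (_ : τ ≠ 0),
    ENNReal.ofReal (|u (flowY τ z) - u z| / |τ| ^ (α / ϑ))

open Classical in
/-- The intrinsic Hölder seminorm `‖u‖_{C^α}`, defined recursively (with fuel). -/
def hNormAux (ϑ : ℝ) : ℕ → ℝ → (Pt d → ℝ) → ℝ≥0∞
  | 0, α, u => semiY ϑ α u + ∑ i, semiZ i α u
  | n + 1, α, u =>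
    if α ≤ min 1 ϑ then semiY ϑ α u + ∑ i, semiZ i α u
    else if α ≤ max 1 ϑ then
      if ϑ < 1 then hNormAux ϑ n (α - ϑ) (lieY u) + ∑ i, semiZ i α u
      else semiY ϑ α u + ∑ i, hNormAux ϑ n (α - 1) (dv i u)
    else hNormAux ϑ n (α - ϑ) (lieY u) + ∑ i, hNormAux ϑ n (α - 1) (dv i u)

open Classical in
/-- Membership in the intrinsic Hölder space `C^α`, defined recursively (with fuel). -/
def memAux (ϑ : ℝ) : ℕ → ℝ → (Pt d → ℝ) → Prop
  | 0, α, u => hNormAux ϑ 0 α u ≠ ⊤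
  | n + 1, α, u =>
    if α ≤ min 1 ϑ then hNormAux ϑ (n + 1) α u ≠ ⊤
    else if α ≤ max 1 ϑ then
      if ϑ < 1 then
        (∀ z : Pt d, HasLieAt flowY u z) ∧ memAux ϑ n (α - ϑ) (lieY u) ∧
          hNormAux ϑ (n + 1) α u ≠ ⊤
      else
        (∀ (i : Fin d) (z : Pt d), HasLieAt (flowZ (EuclideanSpace.single i 1)) u z) ∧
          (∀ i : Fin d, memAux ϑ n (α - 1) (dv i u)) ∧ hNormAux ϑ (n + 1) α u ≠ ⊤
    else
      (∀ z : Pt d, HasLieAt flowY u z) ∧ memAux ϑ n (α - ϑ) (lieY u) ∧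
        (∀ (i : Fin d) (z : Pt d), HasLieAt (flowZ (EuclideanSpace.single i 1)) u z) ∧
          (∀ i : Fin d, memAux ϑ n (α - 1) (dv i u)) ∧ hNormAux ϑ (n + 1) α u ≠ ⊤

/-- Enough fuel for the recursion defining `C^α`. -/
def fuel (ϑ α : ℝ) : ℕ := Nat.ceil (α / min 1 ϑ) + 1

/-- The intrinsic Hölder seminorm `‖u‖_{C^α}` (value in `ℝ≥0∞`). -/
def holderNorm (ϑ α : ℝ) (u : Pt d → ℝ) : ℝ≥0∞ := hNormAux ϑ (fuel ϑ α) α u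

/-- `u ∈ C^α`. -/
def IsHolder (ϑ α : ℝ) (u : Pt d → ℝ) : Prop := memAux ϑ (fuel ϑ α) α u

/-!
Every `u ∈ C^α` with `α > 0` is continuous: it varies continuously along `Y` and `Z_i`, hence along
`∂_{x_i}` because the commutators of the flows of `Y` and `Z_i` are translations in `x_i`, and these
directions together reach a full neighbourhood of each point.

Derivatives along `Y` and `Z_i` lose order `ϑ` and `1` by the recursive definition of `C^α`. For
`∂_{x_i}` one uses `∂_{x_i} u = [Z_i, Y] u = Z_i Y u - Y Z_i u`, which holds in the strong sense as
soon as `u, Y u, Z_i u, Z_i Y u, Y Z_i u` are continuous. To see this, replace `u` by its integral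
over a segment of the orbits of `∂_{x_i}`. This central field commutes with `Y` and `Z_i`, so the
derivatives of the integral along them are the integrals of those of `u`, and the integral is
moreover differentiable along `∂_{x_i}`, with derivative a difference of values of `u`; symmetry of
mixed partials then writes this difference as the integral of `Z_i Y u - Y Z_i u`. Therefore
`∂_{x_i} u ∈ C^{α-1-ϑ}`, with norm at most `‖Y u‖_{C^{α-ϑ}} + ‖Z_i u‖_{C^{α-1}} ≤ ‖u‖_{C^α}`.
-/

open Filter Topology

section IteratedDerivatives

variable {E : Type*} [NormedAddCommGroup E] [NormedSpace ℝ E]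

theorem hasDerivAt_intervalIntegral_of_continuous_deriv {F F' : ℝ → ℝ → E}
    (hF : ∀ x, Continuous (F x)) (hF' : Continuous (Function.uncurry F'))
    (hderiv : ∀ x t, HasDerivAt (F · t) (F' x t) x) (a b x₀ : ℝ) :
    HasDerivAt (fun x => ∫ t in a..b, F x t) (∫ t in a..b, F' x₀ t) x₀ := by
  obtain ⟨C, hC⟩ := ((isCompact_closedBall x₀ 1).prod
    (isCompact_uIcc (a := a) (b := b))).exists_bound_of_continuousOn hF'.continuousOn
  exact (intervalIntegral.hasDerivAt_integral_of_dominated_loc_of_deriv_le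
    (bound := fun _ => C) (Metric.closedBall_mem_nhds x₀ one_pos)
    (.of_forall fun x => (hF x).aestronglyMeasurable)
    ((hF x₀).intervalIntegrable _ _)
    (hF'.uncurry_left x₀).aestronglyMeasurable
    (.of_forall fun t ht x hx => hC (x, t) ⟨hx, Set.uIoc_subset_uIcc ht⟩)
    intervalIntegrable_const
    (.of_forall fun t _ x _ => hderiv x t)).2

/-- Symmetry of mixed partials where `∂η ∂τ F` is not known to exist beforehand: `F τ` is a
primitive of `Fη τ`, and `∂τ` may be taken under that integral. -/
theorem hasDerivAt_partial_of_continuous_mixed_partial [CompleteSpace E] {F Fη A : ℝ → ℝ → E}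
    {D : ℝ → E} {τ₀ : ℝ} (hFη : ∀ τ η, HasDerivAt (F τ) (Fη τ η) η)
    (hFτ : ∀ η, HasDerivAt (F · η) (D η) τ₀) (hA : ∀ τ η, HasDerivAt (Fη · η) (A τ η) τ)
    (cFη : ∀ τ, Continuous (Fη τ)) (cA : Continuous (Function.uncurry A)) (η₀ : ℝ) :
    HasDerivAt D (A τ₀ η₀) η₀ := by
  have hF_sub : ∀ τ η, F τ η - F τ η₀ = ∫ q in η₀..η, Fη τ q := fun τ η =>
    (intervalIntegral.integral_eq_sub_of_hasDerivAt (fun q _ => hFη τ q)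
      ((cFη τ).intervalIntegrable _ _)).symm
  have hD : ∀ η, D η = D η₀ + ∫ q in η₀..η, A τ₀ q := fun η => by
    refine eq_add_of_sub_eq' (((hFτ η).sub (hFτ η₀)).unique ?_)
    refine (hasDerivAt_intervalIntegral_of_continuous_deriv cFη cA hA η₀ η τ₀).congr_of_eventuallyEq
      (.of_forall fun τ => hF_sub τ η)
  have cA₀ : Continuous (A τ₀) := cA.uncurry_left τ₀
  rw [funext hD]
  exact (intervalIntegral.integral_hasDerivAt_right (cA₀.intervalIntegrable _ _)
    (cA₀.stronglyMeasurableAtFilter _ _) cA₀.continuousAt).const_add _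

theorem hasDerivAt_smul_self_zero {k : ℝ → E} (hk : ContinuousAt k 0) :
    HasDerivAt (fun η => η • k η) (k 0) 0 := by
  rw [hasDerivAt_iff_tendsto_slope_zero]
  refine (hk.tendsto.mono_left nhdsWithin_le_nhds).congr' ?_
  filter_upwards [self_mem_nhdsWithin] with η (hη : η ≠ 0)
  simp [inv_smul_smul₀ hη]

end IteratedDerivatives

section LieDerivative

variable {M : Type*} [TopologicalSpace M] {E : Type*} [NormedAddCommGroup E] [NormedSpace ℝ E]

/-- `g` is the Lie derivative of `u` at every point, along the vector field generating `φ`. -/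
def HasLieDeriv (φ : Flow ℝ M) (u g : M → E) : Prop :=
  ∀ z, HasDerivAt (fun τ => u (φ τ z)) (g z) 0

/-- The Lie derivative of `u` along the vector field generating `φ`, with the junk value of `deriv`
where it does not exist. -/
def lieDeriv (φ : Flow ℝ M) (u : M → E) (z : M) : E := deriv (fun τ => u (φ τ z)) 0

namespace HasLieDeriv

variable {φ : Flow ℝ M} {u v g k : M → E}

theorem lieDeriv_eq (h : HasLieDeriv φ u g) : lieDeriv φ u = g := funext fun z => (h z).deriv

theorem sub (hu : HasLieDeriv φ u g) (hv : HasLieDeriv φ v k) :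
    HasLieDeriv φ (u - v) (g - k) := fun z => (hu z).sub (hv z)

theorem hasDerivAt (h : HasLieDeriv φ u g) (z : M) (τ : ℝ) :
    HasDerivAt (fun τ => u (φ τ z)) (g (φ τ z)) τ := by
  have key : HasDerivAt (fun r => u (φ (r - τ) (φ τ z))) (g (φ τ z)) τ :=
    HasDerivAt.comp_sub_const τ τ (by simpa using h (φ τ z))
  simpa only [← φ.map_add, sub_add_cancel] using key

theorem hasDerivAt_comp_commute {X : Flow ℝ M} (hφ : HasLieDeriv φ u g) (hX : HasLieDeriv X u k)
    (comm : ∀ s τ z, X s (φ τ z) = φ τ (X s z)) (cg : Continuous g) (ck : Continuous k)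
    {σ : ℝ → ℝ} {σ' τ : ℝ} (hσ : HasDerivAt σ σ' τ) (z : M) :
    HasDerivAt (fun τ => u (X (σ τ) (φ τ z)))
      (g (X (σ τ) (φ τ z)) + σ' • k (X (σ τ) (φ τ z))) τ := by
  have hφX : ∀ τ s, HasDerivAt (fun τ => u (X s (φ τ z))) (g (X s (φ τ z))) τ := fun τ s => by
    simpa only [comm] using hφ.hasDerivAt (X s z) τ
  have hjoint := (hasStrictFDerivAt_uncurry_coprod (𝕜 := ℝ) (u := (τ, σ τ))
    (f := fun τ s => u (X s (φ τ z)))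
    (f₁ := fun τ s => .toSpanSingleton ℝ (g (X s (φ τ z))))
    (f₂ := fun τ s => .toSpanSingleton ℝ (k (X s (φ τ z))))
    (.of_forall fun p => (hφX p.1 p.2).hasFDerivAt)
    (.of_forall fun p => (hX.hasDerivAt (φ p.1 z) p.2).hasFDerivAt)
    (Continuous.continuousAt <| (ContinuousLinearMap.toSpanSingletonCLE (𝕜 := ℝ)
      (E := E)).continuous.comp (cg.comp (by fun_prop)))
    (Continuous.continuousAt <| (ContinuousLinearMap.toSpanSingletonCLE (𝕜 := ℝ)
      (E := E)).continuous.comp (ck.comp (by fun_prop)))).hasFDerivAt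
  refine (hjoint.comp_hasDerivAt τ ((hasDerivAt_id τ).prodMk hσ)).congr_deriv ?_
  simp [Function.HasUncurry.uncurry]

end HasLieDeriv

/-- The average (up to the factor `ε`) of `u` over the orbit segment of length `ε` of `X`. It is
differentiable along `X`, whatever the regularity of `u` along `X`. -/
def orbitIntegral (X : Flow ℝ M) (ε : ℝ) (u : M → E) (z : M) : E := ∫ s in (0 : ℝ)..ε, u (X s z)

theorem continuous_orbitIntegral (X : Flow ℝ M) (ε : ℝ) {u : M → E} (hu : Continuous u) :
    Continuous (orbitIntegral X ε u) :=
  intervalIntegral.continuous_parametric_intervalIntegral_of_continuous'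
    (f := fun z s => u (X s z)) (hu.comp (by fun_prop)) 0 ε

theorem hasLieDeriv_orbitIntegral_self [CompleteSpace E] (X : Flow ℝ M) (ε : ℝ) {u : M → E}
    (hu : Continuous u) : HasLieDeriv X (orbitIntegral X ε u) (fun z => u (X ε z) - u z) := by
  intro z
  have cu : Continuous fun s => u (X s z) := by fun_prop
  have hshift : ∀ h, orbitIntegral X ε u (X h z) =
      (∫ s in (0 : ℝ)..ε + h, u (X s z)) - ∫ s in (0 : ℝ)..h, u (X s z) := fun h => by
    simp only [orbitIntegral, ← X.map_add]
    rw [intervalIntegral.integral_comp_add_right (fun s => u (X s z)), zero_add,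
      intervalIntegral.integral_interval_sub_left (cu.intervalIntegrable _ _)
        (cu.intervalIntegrable _ _)]
  have hprim : ∀ r, HasDerivAt (fun h => ∫ s in (0 : ℝ)..h, u (X s z)) (u (X r z)) r := fun r =>
    intervalIntegral.integral_hasDerivAt_right (cu.intervalIntegrable _ _)
      (cu.stronglyMeasurableAtFilter _ _) cu.continuousAt
  simp only [hshift]
  simpa using (HasDerivAt.comp_const_add ε 0 (hprim (ε + 0))).fun_sub (hprim 0)

theorem HasLieDeriv.orbitIntegral {φ X : Flow ℝ M} {u g : M → E} (h : HasLieDeriv φ u g)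
    (comm : ∀ s τ z, X s (φ τ z) = φ τ (X s z)) (hu : Continuous u) (hg : Continuous g) (ε : ℝ) :
    HasLieDeriv φ (orbitIntegral X ε u) (orbitIntegral X ε g) := by
  intro z
  have key := hasDerivAt_intervalIntegral_of_continuous_deriv
    (F := fun τ s => u (φ τ (X s z))) (F' := fun τ s => g (φ τ (X s z)))
    (fun τ => by fun_prop) (hg.comp (by fun_prop)) (fun τ s => h.hasDerivAt (X s z) τ) 0 ε 0
  simpa only [_root_.orbitIntegral, comm, φ.map_zero_apply] using key

/-- `[Z, Y] = X` with `X` central, expressed through the flows. -/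
structure IsHeisenbergTriple (Y Z X : Flow ℝ M) : Prop where
  comm_left : ∀ s τ z, X s (Y τ z) = Y τ (X s z)
  comm_right : ∀ s η z, X s (Z η z) = Z η (X s z)
  bracket : ∀ τ η z, Y τ (Z η z) = X (τ * η) (Z η (Y τ z))

namespace IsHeisenbergTriple

variable {Y Z X : Flow ℝ M} {u f g a b c k : M → E}

theorem comp_comm (H : IsHeisenbergTriple Y Z X) (τ η : ℝ) (z : M) :
    Z η (Y τ z) = X (-(τ * η)) (Y τ (Z η z)) := by
  rw [H.bracket, ← X.map_add, neg_add_cancel, X.map_zero_apply]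

theorem commutator_eq (H : IsHeisenbergTriple Y Z X) (s η : ℝ) (z : M) :
    Y s (Z η (Y (-s) (Z (-η) z))) = X (s * η) z := by
  rw [H.bracket, ← Y.map_add, add_neg_cancel, Y.map_zero_apply, ← Z.map_add, add_neg_cancel,
    Z.map_zero_apply]

theorem hasDerivAt_comp (H : IsHeisenbergTriple Y Z X) (hY : HasLieDeriv Y u g)
    (hX : HasLieDeriv X u k) (cg : Continuous g) (ck : Continuous k) (z : M) (τ η : ℝ) :
    HasDerivAt (fun τ => u (Z η (Y τ z))) (g (Z η (Y τ z)) - η • k (Z η (Y τ z))) τ := by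
  have key := hY.hasDerivAt_comp_commute hX H.comm_left cg ck
    ((hasDerivAt_mul_const η (x := τ)).neg) (Z η z)
  simpa only [Pi.neg_apply, ← H.comp_comm, neg_smul, ← sub_eq_add_neg] using key

/-- Both sides come from the mixed second derivative of `(τ, η) ↦ u (Z η (Y τ z))` at `0`: in one
order it is `a z`, in the other `b z - k z`, because `Y` moved past `Z η` becomes `Y - η X`. -/
theorem lieDeriv_eq_bracket [CompleteSpace E] (H : IsHeisenbergTriple Y Z X)
    (hYu : HasLieDeriv Y u g) (hZu : HasLieDeriv Z u f) (hXu : HasLieDeriv X u k)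
    (hYf : HasLieDeriv Y f a) (hXf : HasLieDeriv X f c) (hZg : HasLieDeriv Z g b)
    (cf : Continuous f) (cg : Continuous g) (ck : Continuous k) (ca : Continuous a)
    (cc : Continuous c) : k = b - a := by
  funext z
  have hmixed := hasDerivAt_partial_of_continuous_mixed_partial
    (F := fun τ η => u (Z η (Y τ z))) (Fη := fun τ η => f (Z η (Y τ z)))
    (A := fun τ η => a (Z η (Y τ z)) - η • c (Z η (Y τ z))) (τ₀ := 0)
    (fun τ η => hZu.hasDerivAt (Y τ z) η) (fun η => H.hasDerivAt_comp hYu hXu cg ck z 0 η)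
    (fun τ η => H.hasDerivAt_comp hYf hXf ca cc z τ η) (fun τ => by fun_prop)
    (by unfold Function.uncurry; fun_prop) 0
  have hother : HasDerivAt (fun η => g (Z η z) - η • k (Z η z)) (b z - k z) 0 := by
    have hk : ContinuousAt (fun η => k (Z η z)) 0 := by fun_prop
    simpa using (hZg z).fun_sub (hasDerivAt_smul_self_zero hk)
  have hab : a z = b z - k z := by
    simpa using hmixed.unique (by simpa using hother)
  rw [Pi.sub_apply, hab, sub_sub_cancel]

theorem sub_eq_orbitIntegral_bracket [CompleteSpace E] (H : IsHeisenbergTriple Y Z X)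
    (hYu : HasLieDeriv Y u g) (hZu : HasLieDeriv Z u f) (hYf : HasLieDeriv Y f a)
    (hZg : HasLieDeriv Z g b) (cu : Continuous u) (cf : Continuous f) (cg : Continuous g)
    (ca : Continuous a) (cb : Continuous b) (ε : ℝ) (z : M) :
    u (X ε z) - u z = orbitIntegral X ε b z - orbitIntegral X ε a z :=
  congrFun (H.lieDeriv_eq_bracket
    (hYu.orbitIntegral H.comm_left cu cg ε) (hZu.orbitIntegral H.comm_right cu cf ε)
    (hasLieDeriv_orbitIntegral_self X ε cu) (hYf.orbitIntegral H.comm_left cf ca ε)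
    (hasLieDeriv_orbitIntegral_self X ε cf) (hZg.orbitIntegral H.comm_right cg cb ε)
    (continuous_orbitIntegral X ε cf) (continuous_orbitIntegral X ε cg) (by fun_prop)
    (continuous_orbitIntegral X ε ca) (by fun_prop)) z

theorem hasLieDeriv_bracket [CompleteSpace E] (H : IsHeisenbergTriple Y Z X)
    (hYu : HasLieDeriv Y u g) (hZu : HasLieDeriv Z u f) (hYf : HasLieDeriv Y f a)
    (hZg : HasLieDeriv Z g b) (cu : Continuous u) (cf : Continuous f) (cg : Continuous g)
    (ca : Continuous a) (cb : Continuous b) : HasLieDeriv X u (b - a) := by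
  intro z
  have hprim : ∀ w : M → E, Continuous w →
      HasDerivAt (fun ε => orbitIntegral X ε w z) (w z) 0 := fun w cw => by
    have c : Continuous fun s => w (X s z) := by fun_prop
    simpa [orbitIntegral] using intervalIntegral.integral_hasDerivAt_right
      (c.intervalIntegrable 0 0) (c.stronglyMeasurableAtFilter _ _) c.continuousAt
  have hX : ∀ ε, u (X ε z) = u z + (orbitIntegral X ε b z - orbitIntegral X ε a z) := fun ε =>
    eq_add_of_sub_eq' (H.sub_eq_orbitIntegral_bracket hYu hZu hYf hZg cu cf cg ca cb ε z)
  simp only [hX]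
  exact ((hprim b cb).sub (hprim a ca)).const_add (u z)

end IsHeisenbergTriple

end LieDerivative

section ContinuousAlong

variable {M : Type*} [TopologicalSpace M] {E : Type*} [NormedAddCommGroup E]

/-- `u` varies little over short pieces of the orbits of `φ`, locally uniformly in the starting
point. Nothing is said about `u` across the orbits. -/
def ContinuousAlong {P : Type*} [TopologicalSpace P] [AddZero P] (φ : Flow P M)
    (u : M → E) : Prop :=
  ∀ z₀, Tendsto (fun p : P × M => u (φ p.1 p.2) - u p.2) (𝓝 (0, z₀)) (𝓝 0)

theorem ContinuousAlong.tendsto_sub {P ι : Type*} [TopologicalSpace P] [AddZero P]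
    {φ : Flow P M} {u : M → E} (h : ContinuousAlong φ u) {l : Filter ι}
    {s : ι → P} {q : ι → M} {z₀ : M} (hs : Tendsto s l (𝓝 0)) (hq : Tendsto q l (𝓝 z₀)) :
    Tendsto (fun i => u (φ (s i) (q i)) - u (q i)) l (𝓝 0) :=
  (h z₀).comp (hs.prodMk_nhds hq)

theorem HasLieDeriv.continuousAlong [NormedSpace ℝ E] [CompleteSpace E] {φ : Flow ℝ M}
    {u g : M → E} (h : HasLieDeriv φ u g) (cg : Continuous g) : ContinuousAlong φ u := by
  intro z₀
  have hFTC : ∀ p : ℝ × M, u (φ p.1 p.2) - u p.2 = ∫ r in (0 : ℝ)..p.1, g (φ r p.2) := fun p => by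
    have c : Continuous fun r => g (φ r p.2) := by fun_prop
    simpa only [φ.map_zero_apply] using (intervalIntegral.integral_eq_sub_of_hasDerivAt
      (fun r _ => h.hasDerivAt p.2 r) (c.intervalIntegrable 0 p.1)).symm
  have hcont : Continuous fun p : ℝ × M => ∫ r in (0 : ℝ)..p.1, g (φ r p.2) :=
    intervalIntegral.continuous_parametric_intervalIntegral_of_continuous
      (f := fun (p : ℝ × M) r => g (φ r p.2)) (cg.comp (by fun_prop)) continuous_fst
  simpa only [hFTC, intervalIntegral.integral_same] using hcont.tendsto (0, z₀)

theorem sqrt_add_sqrt_neg_mul_sqrt_sub_sqrt_neg (s : ℝ) : (√s + √(-s)) * (√s - √(-s)) = s := by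
  rcases le_total 0 s with hs | hs <;> simp [Real.sqrt_eq_zero_of_nonpos, hs]

theorem IsHeisenbergTriple.continuousAlong {Y Z X : Flow ℝ M} {u : M → E}
    (H : IsHeisenbergTriple Y Z X) (hY : ContinuousAlong Y u) (hZ : ContinuousAlong Z u) :
    ContinuousAlong X u := by
  intro z₀
  let τ : ℝ × M → ℝ := fun p => √p.1 + √(-p.1)
  let η : ℝ × M → ℝ := fun p => √p.1 - √(-p.1)
  let q₁ : ℝ × M → M := fun p => Z (-η p) p.2
  let q₂ : ℝ × M → M := fun p => Y (-τ p) (q₁ p)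
  let q₃ : ℝ × M → M := fun p => Z (η p) (q₂ p)
  have tendsto_τ : Tendsto τ (𝓝 (0, z₀)) (𝓝 0) :=
    Continuous.tendsto' (by fun_prop) _ _ (by simp [τ])
  have tendsto_η : Tendsto η (𝓝 (0, z₀)) (𝓝 0) :=
    Continuous.tendsto' (by fun_prop) _ _ (by simp [η])
  have tendsto_q₁ : Tendsto q₁ (𝓝 (0, z₀)) (𝓝 z₀) :=
    Continuous.tendsto' (by fun_prop) _ _ (by simp [q₁, η])
  have tendsto_q₂ : Tendsto q₂ (𝓝 (0, z₀)) (𝓝 z₀) :=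
    Continuous.tendsto' (by fun_prop) _ _ (by simp [q₂, q₁, η, τ])
  have tendsto_q₃ : Tendsto q₃ (𝓝 (0, z₀)) (𝓝 z₀) :=
    Continuous.tendsto' (by fun_prop) _ _ (by simp [q₃, q₂, q₁, η, τ])
  have htelescope := (((hY.tendsto_sub tendsto_τ tendsto_q₃).add
    (hZ.tendsto_sub tendsto_η tendsto_q₂)).add (hY.tendsto_sub (by simpa using tendsto_τ.neg)
    tendsto_q₁)).add (hZ.tendsto_sub (by simpa using tendsto_η.neg)
    (continuous_snd.tendsto _))
  simp only [add_zero] at htelescope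
  refine htelescope.congr fun p => ?_
  have hX : X p.1 p.2 = Y (τ p) (q₃ p) := by
    rw [H.commutator_eq, sqrt_add_sqrt_neg_mul_sqrt_sub_sqrt_neg]
  rw [hX]
  abel

section LineFlow

variable {V : Type*} [NormedAddCommGroup V] [NormedSpace ℝ V]

/-- The one-parameter subgroup in the direction `e` of an action of a vector space. -/
def lineFlow (φ : Flow V M) (e : V) : Flow ℝ M where
  toFun s := φ (s • e)
  cont' := by unfold Function.uncurry; fun_prop
  map_add' s t z := by rw [add_smul, φ.map_add]
  map_zero' z := by rw [zero_smul, φ.map_zero_apply]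

theorem ContinuousAlong.of_lineFlow_basis {ι : Type*} [Finite ι]
    {φ : Flow V M} {u : M → E} (b : Module.Basis ι ℝ V)
    (h : ∀ i, ContinuousAlong (lineFlow φ (b i)) u) : ContinuousAlong φ u := by
  classical
  have := Fintype.ofFinite ι
  have := Module.Finite.of_basis b
  intro z₀
  have hcoord : ∀ i, Continuous (b.coord i) := fun i => LinearMap.continuous_of_finiteDimensional _
  suffices ∀ s : Finset ι, Tendsto
      (fun p : V × M => u (φ (∑ i ∈ s, b.coord i p.1 • b i) p.2) - u p.2) (𝓝 (0, z₀)) (𝓝 0) by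
    simpa [b.sum_repr] using this Finset.univ
  intro s
  induction s using Finset.induction_on with
  | empty => simp
  | insert a s ha ih =>
    have hstep := (h a).tendsto_sub (l := 𝓝 ((0 : V), z₀)) (s := fun p => b.coord a p.1)
      (q := fun p => φ (∑ i ∈ s, b.coord i p.1 • b i) p.2) (z₀ := z₀)
      (Continuous.tendsto' (by fun_prop) _ _ (by simp))
      (Continuous.tendsto' (by fun_prop) _ _ (by simp))
    simpa [Finset.sum_insert ha, φ.map_add, lineFlow] using hstep.add ih

end LineFlow

end ContinuousAlong

section HolderAlong

variable {M : Type*} [TopologicalSpace M] {φ : Flow ℝ M} {p : ℝ} {u v : M → ℝ}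

/-- The `p`-Hölder seminorm of `u` restricted to the orbits of `φ`. -/
def eHolderSeminormAlong (φ : Flow ℝ M) (p : ℝ) (u : M → ℝ) : ℝ≥0∞ :=
  ⨆ (z : M) (τ : ℝ) (_ : τ ≠ 0), ENNReal.ofReal (|u (φ τ z) - u z| / |τ| ^ p)

theorem ofReal_le_eHolderSeminormAlong (z : M) {τ : ℝ} (hτ : τ ≠ 0) :
    ENNReal.ofReal (|u (φ τ z) - u z| / |τ| ^ p) ≤ eHolderSeminormAlong φ p u :=
  le_iSup_of_le z <| le_iSup_of_le τ <| le_iSup_of_le hτ le_rfl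

theorem abs_sub_le_eHolderSeminormAlong (h : eHolderSeminormAlong φ p u ≠ ⊤) (z : M) (τ : ℝ) :
    |u (φ τ z) - u z| ≤ (eHolderSeminormAlong φ p u).toReal * |τ| ^ p := by
  rcases eq_or_ne τ 0 with rfl | hτ
  · simpa using by positivity
  · rw [← div_le_iff₀ (by positivity), ← ENNReal.ofReal_le_iff_le_toReal h]
    exact ofReal_le_eHolderSeminormAlong z hτ

theorem ContinuousAlong.of_eHolderSeminormAlong_ne_top (hp : 0 < p)
    (h : eHolderSeminormAlong φ p u ≠ ⊤) : ContinuousAlong φ u := fun z₀ => by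
  refine squeeze_zero_norm (fun q => abs_sub_le_eHolderSeminormAlong h q.2 q.1) ?_
  refine Continuous.tendsto' ?_ _ _ (by simp [hp.ne'])
  exact continuous_const.mul ((continuous_abs.comp continuous_fst).rpow_const fun _ => .inr hp.le)

theorem eHolderSeminormAlong_sub_le :
    eHolderSeminormAlong φ p (u - v) ≤ eHolderSeminormAlong φ p u + eHolderSeminormAlong φ p v := by
  refine iSup_le fun z => iSup_le fun τ => iSup_le fun hτ => ?_
  have hdiv : |(u - v) (φ τ z) - (u - v) z| / |τ| ^ p ≤
      |u (φ τ z) - u z| / |τ| ^ p + |v (φ τ z) - v z| / |τ| ^ p := by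
    rw [← add_div, Pi.sub_apply, Pi.sub_apply, sub_sub_sub_comm]
    gcongr
    exact abs_sub _ _
  exact (ENNReal.ofReal_le_ofReal hdiv).trans <| ENNReal.ofReal_add_le.trans <|
    add_le_add (ofReal_le_eHolderSeminormAlong z hτ) (ofReal_le_eHolderSeminormAlong z hτ)

end HolderAlong

section Galilean

/-- The flow of the drift field `Y`. -/
def driftFlow : Flow ℝ (Pt d) where
  toFun := flowY
  cont' := by unfold Function.uncurry flowY; fun_prop
  map_add' s t z := by simp only [flowY, add_smul, add_comm s, add_assoc]
  map_zero' z := by simp [flowY]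

/-- Translations in the velocity variable; the field `Z_h` generates the line in direction `h`. -/
def velocityShift : Flow (EuclideanSpace ℝ (Fin d)) (Pt d) where
  toFun h z := (z.1, z.2.1, z.2.2 + h)
  cont' := by unfold Function.uncurry; fun_prop
  map_add' h k z := by simp only [add_assoc, add_comm h]
  map_zero' z := by simp

/-- Translations in the position variable. -/
def positionShift : Flow (EuclideanSpace ℝ (Fin d)) (Pt d) where
  toFun h z := (z.1, z.2.1 + h, z.2.2)
  cont' := by unfold Function.uncurry; fun_prop
  map_add' h k z := by simp only [add_assoc, add_comm h]
  map_zero' z := by simp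

theorem isHeisenbergTriple_shift (h : EuclideanSpace ℝ (Fin d)) :
    IsHeisenbergTriple driftFlow (lineFlow velocityShift h) (lineFlow positionShift h) where
  comm_left s τ z := by simp [driftFlow, flowY, lineFlow, positionShift, add_right_comm]
  comm_right s η z := rfl
  bracket τ η z := by
    simp [driftFlow, flowY, lineFlow, positionShift, velocityShift, mul_smul, add_assoc]

theorem continuous_of_continuousAlong {E : Type*} [NormedAddCommGroup E] {u : Pt d → E}
    (hY : ContinuousAlong driftFlow u) (hV : ContinuousAlong velocityShift u)
    (hX : ContinuousAlong positionShift u) : Continuous u := by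
  refine continuous_iff_continuousAt.2 fun z₀ => (?_ : Tendsto u (𝓝 z₀) (𝓝 (u z₀)))
  let τ : Pt d → ℝ := fun z => z₀.1 - z.1
  let h : Pt d → EuclideanSpace ℝ (Fin d) := fun z => z₀.2.2 - z.2.2
  let y : Pt d → EuclideanSpace ℝ (Fin d) := fun z => z₀.2.1 - z.2.1 - τ z • z₀.2.2
  let q₁ : Pt d → Pt d := fun z => velocityShift (h z) z
  let q₂ : Pt d → Pt d := fun z => driftFlow (τ z) (q₁ z)
  have tendsto_τ : Tendsto τ (𝓝 z₀) (𝓝 0) := Continuous.tendsto' (by fun_prop) _ _ (by simp [τ])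
  have tendsto_h : Tendsto h (𝓝 z₀) (𝓝 0) := Continuous.tendsto' (by fun_prop) _ _ (by simp [h])
  have tendsto_y : Tendsto y (𝓝 z₀) (𝓝 0) :=
    Continuous.tendsto' (by fun_prop) _ _ (by simp [y, τ])
  have tendsto_q₁ : Tendsto q₁ (𝓝 z₀) (𝓝 z₀) :=
    Continuous.tendsto' (by fun_prop) _ _ (by simp [q₁, h])
  have tendsto_q₂ : Tendsto q₂ (𝓝 z₀) (𝓝 z₀) :=
    Continuous.tendsto' (driftFlow.continuous (by fun_prop) (by fun_prop)) _ _
      (by simp [q₁, h, τ])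
  have htelescope := ((hX.tendsto_sub tendsto_y tendsto_q₂).add
    (hY.tendsto_sub tendsto_τ tendsto_q₁)).add (hV.tendsto_sub tendsto_h tendsto_id)
  have hend : ∀ z, positionShift (y z) (q₂ z) = z₀ := fun z => by
    simp [positionShift, q₂, q₁, driftFlow, flowY, velocityShift, y, τ, h]
  have hsub : Tendsto (fun z => u z₀ - u z) (𝓝 z₀) (𝓝 0) := by
    simpa [hend, q₂, q₁] using htelescope
  simpa using hsub.const_sub (u z₀)

/-- The fields `Y` (`none`) and `Z_i` (`some i`) that generate the intrinsic geometry. -/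
def horizontalFlow : Option (Fin d) → Flow ℝ (Pt d)
  | none => driftFlow
  | some i => lineFlow velocityShift (EuclideanSpace.single i 1)

/-- The formal degrees of `Y` and `Z_i`. -/
def horizontalWeight (ϑ : ℝ) : Option (Fin d) → ℝ
  | none => ϑ
  | some _ => 1

theorem horizontalWeight_pos {ϑ : ℝ} (hϑ : 0 < ϑ) : ∀ j : Option (Fin d), 0 < horizontalWeight ϑ j
  | none => hϑ
  | some _ => one_pos

theorem min_le_horizontalWeight (ϑ : ℝ) : ∀ j : Option (Fin d), min 1 ϑ ≤ horizontalWeight ϑ j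
  | none => min_le_right _ _
  | some _ => min_le_left _ _

section ContinuousHorizontal

variable {E : Type*} [NormedAddCommGroup E] {u : Pt d → E}

theorem continuousAlong_velocityShift (h : ∀ j, ContinuousAlong (horizontalFlow j) u) :
    ContinuousAlong velocityShift u :=
  .of_lineFlow_basis (EuclideanSpace.basisFun (Fin d) ℝ).toBasis fun i => by
    simpa using! h (some i)

theorem continuousAlong_positionShift (h : ∀ j, ContinuousAlong (horizontalFlow j) u) :
    ContinuousAlong positionShift u :=
  .of_lineFlow_basis (EuclideanSpace.basisFun (Fin d) ℝ).toBasis fun i => by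
    simpa using (isHeisenbergTriple_shift _).continuousAlong (h none) (h (some i))

theorem continuous_of_continuousAlong_horizontalFlow
    (h : ∀ j, ContinuousAlong (horizontalFlow j) u) : Continuous u :=
  continuous_of_continuousAlong (h none) (continuousAlong_velocityShift h)
    (continuousAlong_positionShift h)

end ContinuousHorizontal

end Galilean

theorem forall_of_forall_sub {ι : Type*} {w : ι → ℝ} {m : ℝ} (hm : 0 < m) (hw : ∀ j, m ≤ w j)
    {P : ℝ → Prop} (h : ∀ α, (∀ j, w j < α → P (α - w j)) → P α) (α : ℝ) : P α := by
  have hbounded : ∀ n : ℕ, ∀ α ≤ n * m, P α := by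
    intro n
    induction n with
    | zero =>
      refine fun α hα => h α fun j hj => absurd hα (not_le.2 ?_)
      simpa using hm.trans_le ((hw j).trans hj.le)
    | succ n ih =>
      refine fun α hα => h α fun j _ => ih _ ?_
      push_cast at hα
      linarith [hw j]
  obtain ⟨n, hn⟩ := exists_nat_ge (α / m)
  exact hbounded n α ((div_le_iff₀ hm).1 hn)

section Recursion

variable {ϑ α : ℝ} {u v : Pt d → ℝ} {n m : ℕ}

theorem semiZ_eq_eHolderSeminormAlong (i : Fin d) (α : ℝ) (u : Pt d → ℝ) :
    semiZ i α u = eHolderSeminormAlong (horizontalFlow (some i)) (α / 1) u := by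
  rw [div_one]
  rfl

theorem hNormAux_succ (ϑ : ℝ) (n : ℕ) (α : ℝ) (u : Pt d → ℝ) :
    hNormAux ϑ (n + 1) α u = ∑ j, if α ≤ horizontalWeight ϑ j then
      eHolderSeminormAlong (horizontalFlow j) (α / horizontalWeight ϑ j) u
    else hNormAux ϑ n (α - horizontalWeight ϑ j) (lieDeriv (horizontalFlow j) u) := by
  have hlt : ∀ {a b : ℝ}, ¬α ≤ a → α ≤ b → a < b := fun ha hb => (not_le.1 ha).trans_le hb
  simp only [hNormAux, Fintype.sum_option, horizontalWeight, le_min_iff, le_max_iff,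
    semiZ_eq_eHolderSeminormAlong]
  by_cases h₁ : α ≤ 1 <;> by_cases hϑ : α ≤ ϑ
  · simp only [h₁, hϑ]; rfl
  · simp only [h₁, hϑ, hlt hϑ h₁]; rfl
  · simp only [h₁, hϑ, (hlt h₁ hϑ).not_gt]; rfl
  · simp only [h₁, hϑ]; rfl

theorem forall_hasLieAt_iff {φ : Flow ℝ (Pt d)} :
    (∀ z, HasLieAt φ u z) ↔ HasLieDeriv φ u (lieDeriv φ u) :=
  forall_congr' fun _ => hasDerivAt_deriv_iff.symm

theorem memAux_succ_iff : memAux ϑ (n + 1) α u ↔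
    (∀ j, horizontalWeight ϑ j < α →
      HasLieDeriv (horizontalFlow j) u (lieDeriv (horizontalFlow j) u) ∧
      memAux ϑ n (α - horizontalWeight ϑ j) (lieDeriv (horizontalFlow j) u)) ∧
    hNormAux ϑ (n + 1) α u ≠ ⊤ := by
  simp only [memAux, Option.forall, horizontalWeight, le_min_iff, le_max_iff,
    ← forall_hasLieAt_iff]
  rcases le_or_gt α 1 with h₁ | h₁ <;> rcases le_or_gt α ϑ with hϑ | hϑ
  · simp [h₁, hϑ, h₁.not_gt, hϑ.not_gt]
  · simp only [h₁, hϑ.not_ge, and_false, ↓reduceIte, or_false, hϑ.trans_le h₁, ne_eq, hϑ,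
      forall_const, h₁.not_gt, IsEmpty.forall_iff, implies_true, and_true, and_assoc]
    rfl
  · simp only [h₁.not_ge, hϑ, and_true, ↓reduceIte, or_true, (h₁.trans_le hϑ).not_gt, ne_eq,
      hϑ.not_gt, IsEmpty.forall_iff, h₁, forall_const, forall_and, true_and, and_assoc]
    rfl
  · simp only [h₁.not_ge, hϑ.not_ge, and_self, ↓reduceIte, or_self, ne_eq, hϑ, forall_const, h₁,
      forall_and, and_assoc]
    rfl

theorem hNormAux_eq_and_memAux_iff (hn₀ : n ≠ 0) (hm₀ : m ≠ 0) (hn : α ≤ n * min 1 ϑ)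
    (hm : α ≤ m * min 1 ϑ) :
    hNormAux ϑ n α u = hNormAux ϑ m α u ∧ (memAux ϑ n α u ↔ memAux ϑ m α u) := by
  induction n generalizing m α u with
  | zero => exact absurd rfl hn₀
  | succ n ih =>
    obtain ⟨m, rfl⟩ := Nat.exists_eq_succ_of_ne_zero hm₀
    have hpos : ∀ {k : ℕ} {j : Option (Fin d)}, α ≤ (k + 1 : ℕ) * min 1 ϑ →
        horizontalWeight ϑ j < α → k ≠ 0 := by
      rintro k j hk hj rfl
      rw [zero_add, Nat.cast_one, one_mul] at hk
      exact (hk.trans (min_le_horizontalWeight ϑ j)).not_gt hj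
    have hle : ∀ {k : ℕ} (j : Option (Fin d)), α ≤ (k + 1 : ℕ) * min 1 ϑ →
        α - horizontalWeight ϑ j ≤ k * min 1 ϑ := fun j hk => by
      push_cast at hk
      linarith [min_le_horizontalWeight ϑ j]
    have hrec := fun (j : Option (Fin d)) (hj : horizontalWeight ϑ j < α) =>
      ih (u := lieDeriv (horizontalFlow j) u) (hpos hn hj) (hpos hm hj) (hle j hn) (hle j hm)
    have hnorm : hNormAux ϑ (n + 1) α u = hNormAux ϑ (m + 1) α u := by
      rw [hNormAux_succ, hNormAux_succ]
      refine Finset.sum_congr rfl fun j _ => ?_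
      split_ifs with hj
      · rfl
      · exact (hrec j (not_le.1 hj)).1
    refine ⟨hnorm, ?_⟩
    rw [memAux_succ_iff, memAux_succ_iff, hnorm]
    exact and_congr_left' (forall₂_congr fun j hj => and_congr_right' (hrec j hj).2)

theorem hNormAux_ceil_sub_eq_and_memAux_ceil_sub_iff (hϑ : 0 < ϑ) {j : Option (Fin d)}
    (hj : horizontalWeight ϑ j < α) :
    hNormAux ϑ ⌈α / min 1 ϑ⌉₊ (α - horizontalWeight ϑ j) u =
      holderNorm ϑ (α - horizontalWeight ϑ j) u ∧
    (memAux ϑ ⌈α / min 1 ϑ⌉₊ (α - horizontalWeight ϑ j) u ↔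
      IsHolder ϑ (α - horizontalWeight ϑ j) u) := by
  have hmin : 0 < min 1 ϑ := lt_min one_pos hϑ
  have hw := horizontalWeight_pos hϑ j
  refine hNormAux_eq_and_memAux_iff (Nat.ceil_pos.2 (div_pos (hw.trans hj) hmin)).ne'
    (Nat.succ_ne_zero _) ((sub_le_self _ hw.le).trans ?_) ?_ <;> rw [← div_le_iff₀ hmin]
  · exact Nat.le_ceil _
  · exact (Nat.le_ceil _).trans (Nat.cast_le.2 (Nat.le_succ _))

/-- The contribution of the direction `j` to `‖u‖_{C^α}`. -/
def directionalSeminorm (ϑ α : ℝ) (j : Option (Fin d)) (u : Pt d → ℝ) : ℝ≥0∞ :=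
  if α ≤ horizontalWeight ϑ j then
    eHolderSeminormAlong (horizontalFlow j) (α / horizontalWeight ϑ j) u
  else holderNorm ϑ (α - horizontalWeight ϑ j) (lieDeriv (horizontalFlow j) u)

theorem directionalSeminorm_of_le {j : Option (Fin d)} (hj : α ≤ horizontalWeight ϑ j) :
    directionalSeminorm ϑ α j u =
      eHolderSeminormAlong (horizontalFlow j) (α / horizontalWeight ϑ j) u :=
  if_pos hj

theorem directionalSeminorm_of_lt {j : Option (Fin d)} (hj : horizontalWeight ϑ j < α) :
    directionalSeminorm ϑ α j u =
      holderNorm ϑ (α - horizontalWeight ϑ j) (lieDeriv (horizontalFlow j) u) :=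
  if_neg hj.not_ge

theorem holderNorm_eq_sum (hϑ : 0 < ϑ) (α : ℝ) (u : Pt d → ℝ) :
    holderNorm ϑ α u = ∑ j, directionalSeminorm ϑ α j u := by
  rw [holderNorm, fuel, hNormAux_succ]
  refine Finset.sum_congr rfl fun j _ => ?_
  split_ifs with hj
  · rw [directionalSeminorm_of_le hj]
  · rw [directionalSeminorm_of_lt (not_le.1 hj),
      (hNormAux_ceil_sub_eq_and_memAux_ceil_sub_iff hϑ (not_le.1 hj)).1]

theorem isHolder_iff (hϑ : 0 < ϑ) : IsHolder ϑ α u ↔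
    (∀ j, horizontalWeight ϑ j < α →
      HasLieDeriv (horizontalFlow j) u (lieDeriv (horizontalFlow j) u) ∧
      IsHolder ϑ (α - horizontalWeight ϑ j) (lieDeriv (horizontalFlow j) u)) ∧
    holderNorm ϑ α u ≠ ⊤ := by
  rw [IsHolder, fuel, memAux_succ_iff]
  exact and_congr_left' (forall₂_congr fun j hj =>
    and_congr_right' (hNormAux_ceil_sub_eq_and_memAux_ceil_sub_iff hϑ hj).2)

theorem directionalSeminorm_le_holderNorm (hϑ : 0 < ϑ) (j : Option (Fin d)) :
    directionalSeminorm ϑ α j u ≤ holderNorm ϑ α u := by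
  rw [holderNorm_eq_sum hϑ]
  exact Finset.single_le_sum_of_canonicallyOrdered (f := fun j => directionalSeminorm ϑ α j u)
    (Finset.mem_univ j)

end Recursion

section IntrinsicHolder

variable {ϑ α c : ℝ} {u v : Pt d → ℝ}

theorem order_induction (d : ℕ) (hϑ : 0 < ϑ) {P : ℝ → Prop}
    (h : ∀ α, (∀ j : Option (Fin d), horizontalWeight ϑ j < α → P (α - horizontalWeight ϑ j)) →
      P α) (α : ℝ) : P α :=
  forall_of_forall_sub (lt_min one_pos hϑ) (min_le_horizontalWeight ϑ) h α

theorem IsHolder.continuous (hϑ : 0 < ϑ) (hα : 0 < α) (hu : IsHolder ϑ α u) : Continuous u := by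
  induction α using order_induction d hϑ generalizing u with
  | h α ih =>
    obtain ⟨hderiv, hnorm⟩ := (isHolder_iff hϑ).1 hu
    refine continuous_of_continuousAlong_horizontalFlow fun j => ?_
    rcases lt_or_ge (horizontalWeight ϑ j) α with hj | hj
    · exact (hderiv j hj).1.continuousAlong (ih j hj (sub_pos.2 hj) (hderiv j hj).2)
    · refine .of_eHolderSeminormAlong_ne_top (div_pos hα (horizontalWeight_pos hϑ j)) ?_
      rw [← directionalSeminorm_of_le hj]
      exact ne_top_of_le_ne_top hnorm (directionalSeminorm_le_holderNorm hϑ j)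

theorem IsHolder.sub_and_holderNorm_sub_le (hϑ : 0 < ϑ) (hu : IsHolder ϑ α u)
    (hv : IsHolder ϑ α v) :
    IsHolder ϑ α (u - v) ∧ holderNorm ϑ α (u - v) ≤ holderNorm ϑ α u + holderNorm ϑ α v := by
  induction α using order_induction d hϑ generalizing u v with
  | h α ih =>
    obtain ⟨hu', hu_norm⟩ := (isHolder_iff hϑ).1 hu
    obtain ⟨hv', hv_norm⟩ := (isHolder_iff hϑ).1 hv
    have hderiv : ∀ j, horizontalWeight ϑ j < α →
        HasLieDeriv (horizontalFlow j) (u - v)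
          (lieDeriv (horizontalFlow j) u - lieDeriv (horizontalFlow j) v) :=
      fun j hj => (hu' j hj).1.sub (hv' j hj).1
    have hrec := fun j hj => ih j hj (hu' j hj).2 (hv' j hj).2
    have hnorm : holderNorm ϑ α (u - v) ≤ holderNorm ϑ α u + holderNorm ϑ α v := by
      simp only [holderNorm_eq_sum hϑ, ← Finset.sum_add_distrib]
      refine Finset.sum_le_sum fun j _ => ?_
      rcases lt_or_ge (horizontalWeight ϑ j) α with hj | hj
      · simpa only [directionalSeminorm_of_lt hj, (hderiv j hj).lieDeriv_eq] using (hrec j hj).2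
      · simpa only [directionalSeminorm_of_le hj] using eHolderSeminormAlong_sub_le
    refine ⟨(isHolder_iff hϑ).2 ⟨fun j hj => ?_, ?_⟩, hnorm⟩
    · rw [(hderiv j hj).lieDeriv_eq]
      exact ⟨hderiv j hj, (hrec j hj).1⟩
    · exact ne_top_of_le_ne_top (ENNReal.add_ne_top.2 ⟨hu_norm, hv_norm⟩) hnorm

/-- The generator of `φ` acts as an operator of degree `c`: whenever `α > c`, every `u ∈ C^α` is
differentiable along `φ`, with derivative in `C^{α-c}` of norm at most that of `u`. -/
def IsHomogeneous (ϑ c : ℝ) (φ : Flow ℝ (Pt d)) : Prop :=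
  ∀ ⦃α u⦄, c < α → IsHolder ϑ α u → HasLieDeriv φ u (lieDeriv φ u) ∧
    IsHolder ϑ (α - c) (lieDeriv φ u) ∧ holderNorm ϑ (α - c) (lieDeriv φ u) ≤ holderNorm ϑ α u

theorem isHomogeneous_horizontalFlow (hϑ : 0 < ϑ) (j : Option (Fin d)) :
    IsHomogeneous ϑ (horizontalWeight ϑ j) (horizontalFlow j) := by
  intro α u hα hu
  have hj := ((isHolder_iff hϑ).1 hu).1 j hα
  refine ⟨hj.1, hj.2, ?_⟩
  rw [← directionalSeminorm_of_lt hα]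
  exact directionalSeminorm_le_holderNorm hϑ j

theorem isHomogeneous_positionShift (hϑ : 0 < ϑ) (i : Fin d) :
    IsHomogeneous ϑ (1 + ϑ) (lineFlow positionShift (EuclideanSpace.single i 1)) := by
  intro α u hα hu
  have hαY : ϑ < α := by linarith
  have hαZ : 1 < α := by linarith
  let Y : Flow ℝ (Pt d) := driftFlow
  let Z : Flow ℝ (Pt d) := lineFlow velocityShift (EuclideanSpace.single i 1)
  have homY : IsHomogeneous ϑ ϑ Y := isHomogeneous_horizontalFlow hϑ none
  have homZ : IsHomogeneous ϑ 1 Z := isHomogeneous_horizontalFlow hϑ (some i)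
  obtain ⟨hYu, mem_Yu, -⟩ := homY hαY hu
  obtain ⟨hZu, mem_Zu, -⟩ := homZ hαZ hu
  obtain ⟨hZYu, mem_ZYu, norm_ZYu⟩ := homZ (lt_sub_iff_add_lt.2 hα) mem_Yu
  obtain ⟨hYZu, mem_YZu, norm_YZu⟩ := homY (lt_sub_iff_add_lt'.2 hα) mem_Zu
  rw [sub_sub, add_comm] at mem_ZYu norm_ZYu
  rw [sub_sub] at mem_YZu norm_YZu
  have hbracket := (isHeisenbergTriple_shift _).hasLieDeriv_bracket hYu hZu hYZu hZYu
    (hu.continuous hϑ (by linarith)) (mem_Zu.continuous hϑ (sub_pos.2 hαZ))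
    (mem_Yu.continuous hϑ (sub_pos.2 hαY)) (mem_YZu.continuous hϑ (sub_pos.2 hα))
    (mem_ZYu.continuous hϑ (sub_pos.2 hα))
  obtain ⟨mem_sub, norm_sub⟩ := mem_ZYu.sub_and_holderNorm_sub_le hϑ mem_YZu
  rw [hbracket.lieDeriv_eq]
  refine ⟨hbracket, mem_sub, norm_sub.trans ?_⟩
  calc _ ≤ holderNorm ϑ (α - ϑ) (lieDeriv Y u) + holderNorm ϑ (α - 1) (lieDeriv Z u) :=
        add_le_add norm_ZYu norm_YZu
    _ = directionalSeminorm ϑ α none u + directionalSeminorm ϑ α (some i) u := by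
        rw [directionalSeminorm_of_lt hαY, directionalSeminorm_of_lt hαZ]
        rfl
    _ ≤ holderNorm ϑ α u := by
        rw [holderNorm_eq_sum hϑ, Fintype.sum_option]
        gcongr
        exact Finset.single_le_sum_of_canonicallyOrdered
          (f := fun i => directionalSeminorm ϑ α (some i) u) (Finset.mem_univ i)

theorem IsHolder.derivList {φ : Fin d → Flow ℝ (Pt d)} (hu : IsHolder ϑ α u)
    (hφ : ∀ i, IsHomogeneous ϑ c (φ i)) (hc : 0 ≤ c) {l : List (Fin d)} (hl : c * l.length < α) :
    ExistsDList (fun i => φ i) (fun i => lieDeriv (φ i)) l u ∧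
    IsHolder ϑ (α - c * l.length) (derivList (fun i => lieDeriv (φ i)) l u) ∧
    holderNorm ϑ (α - c * l.length) (derivList (fun i => lieDeriv (φ i)) l u) ≤
      holderNorm ϑ α u := by
  induction l with
  | nil => simpa [ExistsDList, _root_.derivList] using hu
  | cons i l ih =>
    have hlength : c * (i :: l).length = c * l.length + c := by push_cast [List.length_cons]; ring
    rw [hlength] at hl ⊢
    obtain ⟨hexists, hmem, hnorm⟩ := ih (by linarith)
    obtain ⟨hderiv, hmem', hnorm'⟩ := hφ i (by linarith) hmem
    rw [← sub_sub]
    exact ⟨⟨hexists, forall_hasLieAt_iff.2 hderiv⟩, hmem', hnorm'.trans hnorm⟩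

theorem IsHolder.lieY_iterate (hϑ : 0 < ϑ) {k : ℕ} (hk : ϑ * k < α) (hu : IsHolder ϑ α u) :
    ExistsLieYIter u k ∧ IsHolder ϑ (α - ϑ * k) (lieY^[k] u) ∧
    holderNorm ϑ (α - ϑ * k) (lieY^[k] u) ≤ holderNorm ϑ α u := by
  induction k with
  | zero => simpa [ExistsLieYIter] using hu
  | succ k ih =>
    have hsucc : ϑ * (k + 1 : ℕ) = ϑ * k + ϑ := by push_cast; ring
    rw [hsucc] at hk ⊢
    obtain ⟨hexists, hmem, hnorm⟩ := ih (by linarith)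
    obtain ⟨hderiv, hmem', hnorm'⟩ :=
      isHomogeneous_horizontalFlow hϑ none (lt_sub_iff_add_lt'.2 hk) hmem
    rw [← sub_sub, Function.iterate_succ_apply']
    exact ⟨⟨hexists, forall_hasLieAt_iff.2 hderiv⟩, hmem', hnorm'.trans hnorm⟩

theorem length_idxList (β : Fin d → ℕ) : (idxList β).length = ∑ i, β i := by
  simp [idxList, List.length_flatten, List.map_ofFn, List.sum_ofFn]

theorem IsHolder.dxPow (hϑ : 0 < ϑ) {γ : Fin d → ℕ} (hγ : (1 + ϑ) * (∑ i, γ i : ℕ) < α)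
    (hu : IsHolder ϑ α u) :
    ExistsDxPow γ u ∧ IsHolder ϑ (α - (1 + ϑ) * (∑ i, γ i : ℕ)) (dxPow γ u) ∧
    holderNorm ϑ (α - (1 + ϑ) * (∑ i, γ i : ℕ)) (dxPow γ u) ≤ holderNorm ϑ α u := by
  rw [← length_idxList] at hγ ⊢
  exact hu.derivList (isHomogeneous_positionShift hϑ) (by positivity) hγ

theorem IsHolder.dvPow (hϑ : 0 < ϑ) {β : Fin d → ℕ} (hβ : (∑ i, β i : ℕ) < α)
    (hu : IsHolder ϑ α u) :
    ExistsDvPow β u ∧ IsHolder ϑ (α - (∑ i, β i : ℕ)) (dvPow β u) ∧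
    holderNorm ϑ (α - (∑ i, β i : ℕ)) (dvPow β u) ≤ holderNorm ϑ α u := by
  rw [← length_idxList, ← one_mul ((idxList β).length : ℝ)] at hβ ⊢
  exact hu.derivList (fun i => isHomogeneous_horizontalFlow hϑ (some i)) zero_le_one hβ

end IntrinsicHolder

/-- Intrinsic Hölder space characterization: for `u ∈ C^α` and `k, γ, β` with
`ϑ k + (1+ϑ)|γ| + |β| < α`, the derivative `Y^k ∂_v^β ∂_x^γ u` exists at every point,
belongs to `C^{α − ϑk − (1+ϑ)|γ| − |β|}`, and its seminorm is bounded by `‖u‖_{C^α}`. -/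
theorem intrinsic_holder_characterization (d : ℕ) (hd : 1 ≤ d) (ϑ : ℝ) (hϑ : 0 < ϑ)
    (α : ℝ) (hα : 0 < α) (u : Pt d → ℝ) (hu : IsHolder ϑ α u)
    (k : ℕ) (γ β : Fin d → ℕ)
    (hlt : ϑ * (k : ℝ) + (1 + ϑ) * ((∑ i, γ i : ℕ) : ℝ) + ((∑ i, β i : ℕ) : ℝ) < α) :
    ExistsDxPow γ u ∧
    ExistsDvPow β (dxPow γ u) ∧
    ExistsLieYIter (dvPow β (dxPow γ u)) k ∧
    IsHolder ϑ (α - ϑ * (k : ℝ) - (1 + ϑ) * ((∑ i, γ i : ℕ) : ℝ) - ((∑ i, β i : ℕ) : ℝ))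
      (lieY^[k] (dvPow β (dxPow γ u))) ∧
    holderNorm ϑ (α - ϑ * (k : ℝ) - (1 + ϑ) * ((∑ i, γ i : ℕ) : ℝ) - ((∑ i, β i : ℕ) : ℝ))
      (lieY^[k] (dvPow β (dxPow γ u))) ≤ holderNorm ϑ α u := by
  have hk : 0 ≤ ϑ * k := by positivity
  obtain ⟨exists_dx, mem_dx, norm_dx⟩ := hu.dxPow hϑ (γ := γ) (by linarith)
  obtain ⟨exists_dv, mem_dv, norm_dv⟩ := mem_dx.dvPow hϑ (β := β) (by linarith)
  obtain ⟨exists_Y, mem_Y, norm_Y⟩ := mem_dv.lieY_iterate hϑ (k := k) (by linarith)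
  rw [sub_right_comm α, sub_right_comm (α - _) (ϑ * k)]
  exact ⟨exists_dx, exists_dv, exists_Y, mem_Y, norm_Y.trans (norm_dv.trans norm_dx)⟩

end
end

section
/- Intrinsic Taylor formula (second part of the main theorem): for any α>0 there exists a constant c>0, depending only on d, ϑ and α, such that for any u∈C^α, |u(z) − T_α u(z₀;z)| ≤ c · ‖u‖_{C^α} · ‖z₀⁻¹∘z‖^α for all z, z₀ ∈ ℝ×ℝ^{2d}. -/
noncomputable section
open scoped BigOperators ENNReal

variable {d : ℕ}

/-- The Galilean group law `z₁ ∘ z₂ = (t₁ + t₂, x₁ + x₂ + t₂ v₁, v₁ + v₂)`. -/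
def gmul {d : ℕ} (z₁ z₂ : Pt d) : Pt d :=
  (z₁.1 + z₂.1, z₁.2.1 + z₂.2.1 + z₂.1 • z₁.2.2, z₁.2.2 + z₂.2.2)

/-- The group inverse `(t, x, v)⁻¹ = (−t, t v − x, −v)`. -/
def ginv {d : ℕ} (z : Pt d) : Pt d := (-z.1, z.1 • z.2.2 - z.2.1, -z.2.2)

/-- The homogeneous norm `‖(t,x,v)‖ = |t|^(1/ϑ) + |x|^(1/(ϑ+1)) + |v|`. -/
def hnorm (ϑ : ℝ) {d : ℕ} (z : Pt d) : ℝ :=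
  |z.1| ^ (1 / ϑ) + ‖z.2.1‖ ^ (1 / (ϑ + 1)) + ‖z.2.2‖

open Classical in
/-- The index set `{(k, γ, β) : ϑ k + (1+ϑ)|γ| + |β| < α}` of the intrinsic Taylor polynomial. -/
def taylorIdx (ϑ α : ℝ) (d : ℕ) : Finset (ℕ × (Fin d → ℕ) × (Fin d → ℕ)) :=
  ((Finset.range (Nat.ceil (α / ϑ) + Nat.ceil α + 1)) ×ˢ
    ((Fintype.piFinset fun _ => Finset.range (Nat.ceil α + 1)) ×ˢ
      (Fintype.piFinset fun _ => Finset.range (Nat.ceil α + 1)))).filter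
    fun p => ϑ * (p.1 : ℝ) + (1 + ϑ) * ((∑ i, p.2.1 i : ℕ) : ℝ) + ((∑ i, p.2.2 i : ℕ) : ℝ) < α

/-- The intrinsic Taylor polynomial `T_α u(z₀; z)`. -/
def taylorPoly (ϑ α : ℝ) (u : Pt d → ℝ) (z₀ z : Pt d) : ℝ :=
  ∑ p ∈ taylorIdx ϑ α d,
    (lieY^[p.1] (dvPow p.2.2 (dxPow p.2.1 u)) z₀ /
        ((p.1.factorial : ℝ) * (∏ i, ((p.2.1 i).factorial : ℝ)) *
          (∏ i, ((p.2.2 i).factorial : ℝ)))) *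
      ((z.1 - z₀.1) ^ p.1 *
        (∏ i, (z.2.1 i - z₀.2.1 i - (z.1 - z₀.1) * z₀.2.2 i) ^ p.2.1 i) *
        (∏ i, (z.2.2 i - z₀.2.2 i) ^ p.2.2 i))

/-!
Fix a base point `z₀` and argue by induction on `α`: the horizontal derivatives `Y u` and
`∂_{v_i} u` that the definition of `C^α` provides are approximated near `z₀` by polynomials.
Primitives of these polynomials along the fields are polynomials `F_s` whose increments along the
flow lines match those of `w ↦ u (z₀ ∘ w)` up to `O(R^α)` at homogeneous distance `R`.  Every point
is joined to `0` by a path of flow lines of `Y` and `∂_{v_i}`, displacements in `x` being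
commutators of the two.  The total increment of the `F_s` along such a path is a combination of
powers `l^s`, `s < α`, in the dilation parameter `l`, while two paths with the same endpoint have
increments that agree up to `O(l^α)`, hence exactly.  The total increment is therefore a polynomial
of weighted degree less than `α` in the endpoint, and it approximates `u (z₀ ∘ ·)` up to `O(R^α)`.

It is the Taylor polynomial because, by Markov's inequality, polynomial approximations which are
uniform in `z₀` can be differentiated along every field, `∂_{x_i}` included, without any a priori
smoothness in `x`.
-/

namespace IntrinsicTaylor

open MvPolynomial Filter Topology

/-! ### Primitives along a derivation with a slice -/

section Slice

variable {K A : Type*} [Field K] [CharZero K] [CommRing A] [Algebra K A]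

/-- The primitive `∑_{k < N} (-1)^k / (k+1)! · s^(k+1) · D^k a` of `a` along a derivation `D`, where
`s` is a slice of `D`, that is `D s = 1`. -/
def slicePrimitive (D : Derivation K A A) (s : A) (N : ℕ) (a : A) : A :=
  ∑ k ∈ Finset.range N, ((-1) ^ k / (k + 1).factorial : K) • (s ^ (k + 1) * D^[k] a)

lemma derivation_slicePrimitive (D : Derivation K A A) {s : A} (hs : D s = 1) {N : ℕ} {a : A}
    (hN : D^[N] a = 0) : D (slicePrimitive D s N a) = a := by
  let g (k : ℕ) : A := ((-1) ^ k / k.factorial : K) • (s ^ k * D^[k] a)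
  have telescope (k : ℕ) :
      D (((-1) ^ k / (k + 1).factorial : K) • (s ^ (k + 1) * D^[k] a)) = g k - g (k + 1) := by
    have leibniz : D (s ^ (k + 1) * D^[k] a) =
        ((k + 1 : ℕ) : K) • (s ^ k * D^[k] a) + s ^ (k + 1) * D^[k + 1] a := by
      rw [Derivation.leibniz, Derivation.leibniz_pow, hs, Function.iterate_succ_apply',
        Nat.cast_smul_eq_nsmul, Nat.add_sub_cancel]
      simp only [smul_eq_mul, mul_one, nsmul_eq_mul]
      ring
    have hk : ((k : K) + 1) ≠ 0 := by exact_mod_cast k.succ_ne_zero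
    rw [Derivation.map_smul, leibniz, smul_add, smul_smul, sub_eq_add_neg, ← neg_smul,
      Nat.factorial_succ]
    congr 2
    · push_cast
      field_simp
    · rw [pow_succ]
      ring
  rw [slicePrimitive, map_sum, Finset.sum_congr rfl fun k _ => telescope k,
    Finset.sum_range_sub']
  simp [g, hN]

end Slice

/-! ### Polynomials of bounded weight -/

section Weight

variable {σ : Type*}

/-- The polynomials all of whose monomials have `w`-weight less than `c`. -/
def weightLT (w : σ → ℝ) (c : ℝ) : Submodule ℝ (MvPolynomial σ ℝ) :=
  restrictSupport ℝ {m | Finsupp.weight w m < c}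

variable {w : σ → ℝ} {c n ω : ℝ} {P Q : MvPolynomial σ ℝ}

lemma mem_weightLT_iff : P ∈ weightLT w c ↔ ∀ m, coeff m P ≠ 0 → Finsupp.weight w m < c := by
  simp [weightLT, mem_restrictSupport_iff, Set.subset_def]

lemma monomial_mem_weightLT {m : σ →₀ ℕ} (hm : Finsupp.weight w m < c) (a : ℝ) :
    monomial m a ∈ weightLT w c :=
  (monomial_mem_restrictSupport ℝ).2 (Or.inl hm)

lemma mul_mem_weightLT (hQ : IsWeightedHomogeneous w Q n) (hP : P ∈ weightLT w c) :
    Q * P ∈ weightLT w (c + n) := by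
  classical
  refine mem_weightLT_iff.2 fun m hm => ?_
  obtain ⟨a, ha, b, hb, rfl⟩ := Finset.mem_add.1 (support_mul Q P (mem_support_iff.2 hm))
  rw [map_add, hQ (mem_support_iff.1 ha), add_comm]
  gcongr
  exact mem_weightLT_iff.1 hP b (mem_support_iff.1 hb)

lemma eq_zero_of_mem_weightLT (hw : ∀ s, 0 ≤ w s) (hc : c ≤ 0) (hP : P ∈ weightLT w c) :
    P = 0 := by
  ext m
  by_contra hm
  refine (mem_weightLT_iff.1 hP m hm).not_ge (hc.trans ?_)
  rw [Finsupp.weight_apply]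
  exact Finsupp.sum_nonneg' fun s => nsmul_nonneg (hw s) _

lemma mkDerivation_mem_weightLT {a : σ → MvPolynomial σ ℝ}
    (ha : ∀ s, IsWeightedHomogeneous w (a s) (w s - ω)) (hP : P ∈ weightLT w c) :
    mkDerivation ℝ a P ∈ weightLT w (c - ω) := by
  rw [← support_sum_monomial_coeff P, map_sum]
  refine Submodule.sum_mem _ fun m hm => ?_
  rw [mkDerivation_monomial]
  refine Submodule.smul_mem _ _ (Submodule.sum_mem _ fun s hs => ?_)
  have hlow : Finsupp.weight w (m - Finsupp.single s 1) < c - w s := by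
    have := mem_weightLT_iff.1 hP m (mem_support_iff.1 hm)
    rw [← Finsupp.weight_sub_single_add (w := w) (Finsupp.mem_support_iff.1 hs)] at this
    linarith
  have := mul_mem_weightLT (ha s) (monomial_mem_weightLT hlow (m s))
  rwa [sub_add_sub_cancel, mul_comm] at this

lemma exists_mkDerivation_eq {a : σ → MvPolynomial σ ℝ} (hw : ∀ s, 0 ≤ w s)
    (hω : 0 < ω) (ha : ∀ s, IsWeightedHomogeneous w (a s) (w s - ω)) {r : σ} (hr : w r = ω)
    (har : a r = 1) (hP : P ∈ weightLT w c) :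
    ∃ F ∈ weightLT w (c + ω), mkDerivation ℝ a F = P := by
  have iterate_mem (k : ℕ) : (mkDerivation ℝ a)^[k] P ∈ weightLT w (c - k * ω) := by
    induction k with
    | zero => simpa using hP
    | succ k ih =>
      rw [Function.iterate_succ_apply', Nat.cast_succ, add_one_mul, ← sub_sub]
      exact mkDerivation_mem_weightLT ha ih
  obtain ⟨N, hN⟩ := exists_nat_gt (c / ω)
  have iterate_eq_zero : (mkDerivation ℝ a)^[N] P = 0 :=
    eq_zero_of_mem_weightLT hw (sub_nonpos.2 ((div_lt_iff₀ hω).1 hN).le) (iterate_mem N)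
  refine ⟨slicePrimitive (mkDerivation ℝ a) (X r) N P, ?_,
    derivation_slicePrimitive _ (by rw [mkDerivation_X, har]) iterate_eq_zero⟩
  refine Submodule.sum_mem _ fun k _ => Submodule.smul_mem _ _ ?_
  convert mul_mem_weightLT ((isWeightedHomogeneous_X ℝ w r).pow (k + 1)) (iterate_mem k) using 2
  rw [hr, nsmul_eq_mul]
  push_cast
  ring

lemma totalDegree_le_of_mem_weightLT {μ : ℝ} (hμ : 0 < μ) (hw : ∀ s, μ ≤ w s)
    (hP : P ∈ weightLT w c) : P.totalDegree ≤ ⌈c / μ⌉₊ := by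
  refine Finset.sup_le fun m hm => Nat.cast_le.1 (le_trans ?_ (Nat.le_ceil (c / μ)))
  rw [le_div_iff₀ hμ]
  refine le_trans ?_ (mem_weightLT_iff.1 hP m (mem_support_iff.1 hm)).le
  rw [Finsupp.weight_apply, Finsupp.sum, Finsupp.sum, Nat.cast_sum, Finset.sum_mul]
  exact Finset.sum_le_sum fun s _ => by
    rw [nsmul_eq_mul]
    exact mul_le_mul_of_nonneg_left (hw s) (Nat.cast_nonneg _)

end Weight

section Curve

variable {σ : Type*}

lemma hasDerivAt_eval_curve (a : σ → MvPolynomial σ ℝ) {γ : ℝ → σ → ℝ} {τ : ℝ}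
    (hγ : ∀ s, HasDerivAt (fun r => γ r s) (eval (γ τ) (a s)) τ) (P : MvPolynomial σ ℝ) :
    HasDerivAt (fun r => eval (γ r) P) (eval (γ τ) (mkDerivation ℝ a P)) τ := by
  induction P using MvPolynomial.induction_on with
  | C b => simpa using hasDerivAt_const τ b
  | add P Q hP hQ =>
    simp only [map_add]
    exact hP.add hQ
  | mul_X P s hP =>
    simp only [map_mul, eval_X, Derivation.leibniz, mkDerivation_X, map_add, smul_eq_mul]
    exact (hP.mul (hγ s)).congr_deriv (by ring)

lemma exists_natDegree_le_eval_line (P : MvPolynomial σ ℝ) (a b : σ → ℝ) :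
    ∃ p : Polynomial ℝ, p.natDegree ≤ P.totalDegree ∧ ∀ τ : ℝ, p.eval τ = eval (a + τ • b) P := by
  let line (s : σ) : Polynomial ℝ := Polynomial.C (a s) + Polynomial.X * Polynomial.C (b s)
  refine ⟨aeval line P, ?_, fun τ => ?_⟩
  · simpa using aeval_natDegree_le P le_rfl line (n := 1) fun s => by unfold line; compute_degree
  · have := DFunLike.congr_fun (comp_aeval line (Polynomial.aeval (R := ℝ) τ)) P
    simp only [AlgHom.comp_apply, Polynomial.coe_aeval_eq_eval] at this
    rw [this, ← coe_aeval_eq_eval]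
    refine congrArg (fun x => aeval x P) (funext fun s => ?_)
    simp [line, mul_comm (b s)]

end Curve

section Markov

lemma exists_abs_derivative_eval_le_of_unit (N : ℕ) :
    ∃ C : ℝ, ∀ (p : Polynomial ℝ) (M : ℝ), p.natDegree ≤ N →
      (∀ τ, |τ| ≤ 1 → |p.eval τ| ≤ M) → |p.derivative.eval 0| ≤ C * M := by
  let v (i : ℕ) : ℝ := i / (N + 1)
  let ℓ (i : ℕ) : Polynomial ℝ := Lagrange.basis (Finset.range (N + 1)) v i
  have hv : Set.InjOn v (Finset.range (N + 1)) := fun i _ j _ hij => by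
    have : (N : ℝ) + 1 ≠ 0 := by positivity
    exact_mod_cast (div_left_inj' this).1 hij
  refine ⟨∑ i ∈ Finset.range (N + 1), |(ℓ i).derivative.eval 0|, fun p M hp hM => ?_⟩
  have interpolate : p.derivative.eval 0 =
      ∑ i ∈ Finset.range (N + 1), p.eval (v i) * (ℓ i).derivative.eval 0 := by
    have hdeg : p.degree < (Finset.range (N + 1)).card := by
      rw [Finset.card_range]
      exact Polynomial.degree_le_natDegree.trans_lt (by exact_mod_cast Nat.lt_succ_of_le hp)
    conv_lhs => rw [Lagrange.eq_interpolate hv hdeg]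
    simp [Lagrange.interpolate_apply, Polynomial.eval_finsetSum, ℓ]
  rw [interpolate, Finset.sum_mul]
  refine (Finset.abs_sum_le_sum_abs _ _).trans (Finset.sum_le_sum fun i hi => ?_)
  rw [abs_mul, mul_comm]
  gcongr
  refine hM _ ?_
  have : (i : ℝ) ≤ N + 1 := by exact_mod_cast (Finset.mem_range.1 hi).le
  rw [abs_of_nonneg (by positivity), div_le_one (by positivity)]
  exact this

lemma exists_abs_derivative_eval_le (N : ℕ) :
    ∃ C : ℝ, ∀ (p : Polynomial ℝ) (M ρ : ℝ), p.natDegree ≤ N → 0 < ρ →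
      (∀ τ, |τ| ≤ ρ → |p.eval τ| ≤ M) → |p.derivative.eval 0| ≤ C * M / ρ := by
  obtain ⟨C, hbound⟩ := exists_abs_derivative_eval_le_of_unit N
  refine ⟨C, fun p M ρ hp hρ hM => ?_⟩
  have := hbound (p.comp (Polynomial.C ρ * Polynomial.X)) M
    (by simpa [Polynomial.natDegree_comp, Polynomial.natDegree_C_mul_X ρ hρ.ne'] using hp)
    fun τ hτ => by
      simp only [Polynomial.eval_comp, Polynomial.eval_mul, Polynomial.eval_C, Polynomial.eval_X]
      refine hM _ ?_
      rw [abs_mul, abs_of_pos hρ]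
      exact mul_le_of_le_one_right hρ.le hτ
  simp only [Polynomial.derivative_comp, Polynomial.derivative_C_mul_X, Polynomial.eval_mul,
    Polynomial.eval_comp, Polynomial.eval_C, Polynomial.eval_X, mul_zero, abs_mul,
    abs_of_pos hρ] at this
  rwa [le_div_iff₀ hρ, mul_comm]

end Markov

section Powers

/-- The span of the powers `l ↦ l ^ s`, `s < α`, of a positive variable `l`. -/
def rpowSpan (α : ℝ) : Submodule ℝ (Set.Ioi (0 : ℝ) → ℝ) :=
  Submodule.span ℝ ((fun s l => (l : ℝ) ^ s) '' Set.Iio α)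

lemma rpow_mem_rpowSpan {α s : ℝ} (hs : s < α) :
    (fun l : Set.Ioi (0 : ℝ) => (l : ℝ) ^ s) ∈ rpowSpan α :=
  Submodule.subset_span ⟨s, hs, rfl⟩

lemma mem_rpowSpan_iff {α : ℝ} {h : Set.Ioi (0 : ℝ) → ℝ} : h ∈ rpowSpan α ↔
    ∃ a : ℝ →₀ ℝ, (∀ s ∈ a.support, s < α) ∧ ∀ l, h l = ∑ s ∈ a.support, a s * (l : ℝ) ^ s := by
  simp only [rpowSpan, Finsupp.mem_span_image_iff_linearCombination, Finsupp.mem_supported,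
    Set.subset_def, Finsupp.linearCombination_apply, Finsupp.sum, funext_iff]
  simp [eq_comm]

lemma tendsto_rpow_nhdsGT_zero {e : ℝ} (he : 0 < e) :
    Tendsto (fun l : ℝ => l ^ e) (𝓝[>] 0) (𝓝 0) := by
  have := (Real.continuousAt_rpow_const 0 e (Or.inr he.le)).tendsto
  rw [Real.zero_rpow he.ne'] at this
  exact this.mono_left nhdsWithin_le_nhds

lemma tendsto_sum_rpow_sub {S : Finset ℝ} {s₀ : ℝ} (hs₀ : s₀ ∈ S) (hmin : ∀ s ∈ S, s₀ ≤ s)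
    (a : ℝ → ℝ) : Tendsto (fun l : ℝ => ∑ s ∈ S, a s * l ^ (s - s₀)) (𝓝[>] 0) (𝓝 (a s₀)) := by
  have limit_term (s : ℝ) (hs : s ∈ S) :
      Tendsto (fun l : ℝ => a s * l ^ (s - s₀)) (𝓝[>] 0) (𝓝 (if s = s₀ then a s₀ else 0)) := by
    split_ifs with h
    · subst h
      simp
    · simpa using (tendsto_rpow_nhdsGT_zero
        (sub_pos.2 (lt_of_le_of_ne (hmin s hs) (Ne.symm h)))).const_mul (a s)
  simpa [hs₀] using tendsto_finsetSum S limit_term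

/-- The lowest power dominates as `l → 0`, so its coefficient cannot be nonzero. -/
lemma eq_zero_of_mem_rpowSpan {α C : ℝ} {h : Set.Ioi (0 : ℝ) → ℝ} (hh : h ∈ rpowSpan α)
    (hb : ∀ l : Set.Ioi (0 : ℝ), (l : ℝ) ≤ 1 → |h l| ≤ C * (l : ℝ) ^ α) : h = 0 := by
  obtain ⟨a, ha, hsum⟩ := mem_rpowSpan_iff.1 hh
  suffices a = 0 by
    ext l
    simp [hsum l, this]
  by_contra hne
  obtain ⟨s₀, hs₀, hmin⟩ := a.support.exists_min_image id (Finsupp.support_nonempty_iff.2 hne)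
  refine Finsupp.mem_support_iff.1 hs₀
    (tendsto_nhds_unique (tendsto_sum_rpow_sub hs₀ hmin a) (squeeze_zero_norm' ?_
      (by simpa using (tendsto_rpow_nhdsGT_zero (sub_pos.2 (ha _ hs₀))).const_mul C)))
  filter_upwards [Ioc_mem_nhdsGT (zero_lt_one' ℝ)] with l hl
  have factor : ∑ s ∈ a.support, a s * l ^ (s - s₀) = h ⟨l, hl.1⟩ * l ^ (-s₀) := by
    simp only [hsum, Finset.sum_mul, sub_eq_add_neg, Real.rpow_add hl.1, mul_assoc]
  rw [factor, norm_mul, Real.norm_eq_abs, Real.norm_of_nonneg (Real.rpow_nonneg hl.1.le _),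
    sub_eq_add_neg, Real.rpow_add hl.1, ← mul_assoc]
  exact mul_le_mul_of_nonneg_right (hb ⟨l, hl.1⟩ hl.2) (Real.rpow_nonneg hl.1.le _)

end Powers

section Dilation

variable {σ : Type*} {w : σ → ℝ} {α : ℝ} {P : MvPolynomial σ ℝ}

lemma eval_dilation_monomial (w : σ → ℝ) {l : ℝ} (hl : 0 < l) (x : σ → ℝ) (m : σ →₀ ℕ) (a : ℝ) :
    eval (fun s => l ^ w s * x s) (monomial m a) =
      l ^ Finsupp.weight w m * eval x (monomial m a) := by
  simp only [eval_monomial, Finsupp.prod, Finsupp.weight_apply, Finsupp.sum, mul_pow,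
    Finset.prod_mul_distrib, Real.rpow_sum_of_pos hl, nsmul_eq_mul, mul_comm _ (w _),
    Real.rpow_mul hl.le, Real.rpow_natCast]
  ring

lemma eval_dilation_mem_rpowSpan (hP : P ∈ weightLT w α) (x : σ → ℝ) :
    (fun l : Set.Ioi (0 : ℝ) => eval (fun s => (l : ℝ) ^ w s * x s) P) ∈ rpowSpan α := by
  have : (fun l : Set.Ioi (0 : ℝ) => eval (fun s => (l : ℝ) ^ w s * x s) P) =
      ∑ m ∈ P.support, eval x (monomial m (coeff m P)) •
        fun l : Set.Ioi (0 : ℝ) => (l : ℝ) ^ Finsupp.weight w m := by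
    ext l
    conv_lhs => rw [← support_sum_monomial_coeff P]
    rw [map_sum, Finset.sum_apply]
    refine Finset.sum_congr rfl fun m _ => ?_
    rw [eval_dilation_monomial w l.2, Pi.smul_apply, smul_eq_mul, mul_comm]
  rw [this]
  exact Submodule.sum_mem _ fun m hm => Submodule.smul_mem _ _
    (rpow_mem_rpowSpan (mem_weightLT_iff.1 hP m (mem_support_iff.1 hm)))

lemma mem_weightLT_of_forall_eval_dilation
    (h : ∀ x : σ → ℝ,
      (fun l : Set.Ioi (0 : ℝ) => eval (fun s => (l : ℝ) ^ w s * x s) P) ∈ rpowSpan α) :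
    P ∈ weightLT w α := by
  classical
  let low := P.support.filter fun m => Finsupp.weight w m < α
  let high := P.support.filter fun m => ¬ Finsupp.weight w m < α
  let Q := ∑ m ∈ low, monomial m (coeff m P)
  let H := ∑ m ∈ high, monomial m (coeff m P)
  have hQ : Q ∈ weightLT w α :=
    Submodule.sum_mem _ fun m hm => monomial_mem_weightLT (Finset.mem_filter.1 hm).2 _
  have hPQ : P = Q + H := by
    conv_lhs => rw [← support_sum_monomial_coeff P]
    exact (Finset.sum_filter_add_sum_filter_not _ _ _).symm
  have high_bound (x : σ → ℝ) (l : Set.Ioi (0 : ℝ)) (hl : (l : ℝ) ≤ 1) :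
      |eval (fun s => (l : ℝ) ^ w s * x s) H| ≤
        (∑ m ∈ high, |eval x (monomial m (coeff m P))|) * (l : ℝ) ^ α := by
    simp only [H, map_sum, eval_dilation_monomial w l.2, Finset.sum_mul]
    refine (Finset.abs_sum_le_sum_abs _ _).trans (Finset.sum_le_sum fun m hm => ?_)
    rw [abs_mul, mul_comm, abs_of_pos (Real.rpow_pos_of_pos l.2 _)]
    refine mul_le_mul_of_nonneg_left ?_ (abs_nonneg _)
    exact Real.rpow_le_rpow_of_exponent_ge l.2 hl (not_lt.1 (Finset.mem_filter.1 hm).2)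
  have high_eq_zero : H = 0 := MvPolynomial.funext fun x => by
    have mem := Submodule.sub_mem _ (h x) (eval_dilation_mem_rpowSpan hQ x)
    have := congrFun (eq_zero_of_mem_rpowSpan (by convert mem using 2; simp [hPQ]) (high_bound x))
      ⟨1, Set.mem_Ioi.2 one_pos⟩
    simpa using this
  rwa [hPQ, high_eq_zero, add_zero]

end Dilation

/-! ### Homogeneous geometry of the Galilean group -/

section Geometry

/-- Indices of the coordinates `t`, `x_i`, `v_i`; they also index the left-invariant fields `Y`,
`∂_{x_i}`, `∂_{v_i}`, which agree with the coordinate fields at the origin. -/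
abbrev Coord (d : ℕ) := Unit ⊕ (Fin d ⊕ Fin d)

/-- The index of the coordinate `t` and of the field `Y`. -/
abbrev tc : Coord d := Sum.inl ()

/-- The index of the coordinate `x_i` and of the field `∂_{x_i}`. -/
abbrev xc (i : Fin d) : Coord d := Sum.inr (Sum.inl i)

/-- The index of the coordinate `v_i` and of the field `∂_{v_i}`. -/
abbrev vc (i : Fin d) : Coord d := Sum.inr (Sum.inr i)

/-- Polynomials in the coordinates of a point. -/
abbrev Pol (d : ℕ) := MvPolynomial (Coord d) ℝ

/-- The coordinates of a point. -/
def coord (z : Pt d) : Coord d → ℝ :=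
  Sum.elim (fun _ => z.1) (Sum.elim z.2.1 z.2.2)

/-- The homogeneous weights `ϑ`, `1 + ϑ`, `1` of the coordinates `t`, `x_i`, `v_i`. -/
def hweight (ϑ : ℝ) : Coord d → ℝ :=
  Sum.elim (fun _ => ϑ) (Sum.elim (fun _ => 1 + ϑ) fun _ => 1)

/-- The flow of the field with the given index. -/
def flow : Coord d → ℝ → Pt d → Pt d
  | .inl _ => flowY
  | .inr (.inl i) => flowX (EuclideanSpace.single i 1)
  | .inr (.inr i) => flowZ (EuclideanSpace.single i 1)

/-- The coefficient along `∂_r` of the field with index `s`. -/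
def fieldCoeff (s r : Coord d) : Pol d :=
  match s, r with
  | .inl _, .inl _ => 1
  | .inl _, .inr (.inl i) => X (vc i)
  | .inl _, .inr (.inr _) => 0
  | .inr s, r => (Pi.single (.inr s) 1 : Coord d → Pol d) r

/-- The field with index `s`, acting on polynomials. -/
def polyField (s : Coord d) : Derivation ℝ (Pol d) (Pol d) :=
  mkDerivation ℝ (fieldCoeff s)

/-- The homogeneous dilation by the factor `l`. -/
def dilation (ϑ l : ℝ) (z : Pt d) : Pt d := (l ^ ϑ * z.1, l ^ (1 + ϑ) • z.2.1, l • z.2.2)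

/-- The homogeneous box of radius `R` around the origin. -/
def hbox (ϑ R : ℝ) : Set (Pt d) := {z | ∀ s, |coord z s| ≤ R ^ hweight ϑ s}

variable {ϑ R l τ : ℝ}

lemma coord_injective : Function.Injective (coord : Pt d → Coord d → ℝ) := fun z z' h =>
  Prod.ext (congrFun h tc) (Prod.ext (by ext i; exact congrFun h (xc i))
    (by ext i; exact congrFun h (vc i)))

lemma coord_surjective : Function.Surjective (coord : Pt d → Coord d → ℝ) := fun x =>
  ⟨(x tc, WithLp.toLp 2 fun i => x (xc i), WithLp.toLp 2 fun i => x (vc i)), by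
    ext (_ | _ | _) <;> rfl⟩

lemma coord_zero : coord (0 : Pt d) = 0 := by
  ext (_ | _ | _) <;> rfl

lemma coord_dilation (ϑ l : ℝ) (z : Pt d) :
    coord (dilation ϑ l z) = fun s => l ^ hweight ϑ s * coord z s := by
  ext (_ | _ | _) <;> simp [coord, dilation, hweight]

lemma coord_flow (s : Coord d) (τ : ℝ) (z : Pt d) :
    coord (flow s τ z) = coord z + τ • fun r => eval (coord z) (fieldCoeff s r) := by
  ext r
  rcases s with _ | i | i <;> rcases r with _ | j | j <;>
    simp only [coord, flow, flowX, flowY, flowZ, fieldCoeff, Pi.single_apply, Sum.elim_inl,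
      Sum.elim_inr, Sum.inr.injEq, Sum.inl.injEq, reduceCtorEq, if_false, map_zero, map_one, eval_X,
      Pi.add_apply, Pi.smul_apply, smul_eq_mul, mul_zero, mul_one, add_zero, PiLp.add_apply,
      PiLp.smul_apply, PiLp.single_apply, vc]
  all_goals split_ifs <;> simp

lemma fieldCoeff_self (s : Coord d) : fieldCoeff s s = 1 := by
  rcases s with _ | _ <;> simp [fieldCoeff]

lemma isWeightedHomogeneous_fieldCoeff (ϑ : ℝ) (s r : Coord d) :
    IsWeightedHomogeneous (hweight ϑ) (fieldCoeff s r) (hweight ϑ r - hweight ϑ s) := by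
  rcases s with s | s
  · rcases r with r | r | r
    · simpa [fieldCoeff, hweight] using isWeightedHomogeneous_one ℝ (hweight ϑ)
    · simpa [fieldCoeff, hweight] using isWeightedHomogeneous_X ℝ (hweight ϑ) (vc r)
    · exact isWeightedHomogeneous_zero ℝ _ _
  · by_cases h : r = .inr s
    · subst h
      simpa [fieldCoeff] using isWeightedHomogeneous_one ℝ (hweight ϑ)
    · simpa [fieldCoeff, h] using isWeightedHomogeneous_zero ℝ (hweight ϑ) _

lemma eval_fieldCoeff_flow (s r : Coord d) (τ : ℝ) (z : Pt d) :
    eval (coord (flow s τ z)) (fieldCoeff s r) = eval (coord z) (fieldCoeff s r) := by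
  rcases s with s | s
  · rcases r with r | r | r <;> simp [fieldCoeff, coord, flow, flowY]
  · by_cases h : r = .inr s <;> simp [fieldCoeff, h]

lemma hweight_pos (hϑ : 0 < ϑ) (s : Coord d) : 0 < hweight ϑ s := by
  rcases s with _ | _ | _ <;> simp only [hweight, Sum.elim_inl, Sum.elim_inr] <;> positivity

lemma min_le_hweight (hϑ : 0 < ϑ) (s : Coord d) : min 1 ϑ ≤ hweight ϑ s := by
  rcases s with _ | _ | _ <;> simp [hweight, hϑ.le]

lemma flow_zero (s : Coord d) (z : Pt d) : flow s 0 z = z :=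
  coord_injective (by simp [coord_flow])

lemma flow_add (s : Coord d) (a b : ℝ) (z : Pt d) : flow s (a + b) z = flow s b (flow s a z) :=
  coord_injective <| by
    rw [coord_flow, coord_flow s b]
    simp only [eval_fieldCoeff_flow]
    rw [coord_flow, add_smul, add_assoc]

lemma flow_gmul (s : Coord d) (τ : ℝ) (z z' : Pt d) :
    flow s τ (gmul z z') = gmul z (flow s τ z') := by
  rcases s with s | s | s
  · refine Prod.ext (add_assoc _ _ _) (Prod.ext ?_ rfl)
    simp only [flow, flowY, gmul, smul_add, add_smul]
    abel
  · refine Prod.ext rfl (Prod.ext ?_ rfl)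
    simp only [flow, flowX, gmul]
    abel
  · exact Prod.ext rfl (Prod.ext rfl (add_assoc _ _ _))

lemma gmul_zero (z : Pt d) : gmul z 0 = z := by
  simp [gmul]

lemma gmul_gmul_ginv (z z' : Pt d) : gmul z (gmul (ginv z) z') = z' := by
  refine Prod.ext (by simp [gmul, ginv]) (Prod.ext ?_ (by simp [gmul, ginv]))
  simp only [gmul, ginv, add_smul, smul_neg, neg_smul]
  abel

lemma dilation_zero (ϑ l : ℝ) : dilation ϑ l (0 : Pt d) = 0 := by
  simp [dilation]

lemma dilation_flow (hl : 0 < l) (s : Coord d) (τ : ℝ) (z : Pt d) :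
    dilation ϑ l (flow s τ z) = flow s (l ^ hweight ϑ s * τ) (dilation ϑ l z) := by
  rcases s with s | s | s
  · refine Prod.ext (mul_add _ _ _) (Prod.ext ?_ rfl)
    simp only [dilation, flow, flowY, hweight, Sum.elim_inl, smul_add, smul_smul,
      Real.rpow_add hl, Real.rpow_one]
    congr 2
    ring
  · simp [dilation, flow, flowX, hweight, smul_smul]
  · simp [dilation, flow, flowZ, hweight, smul_smul]

lemma zero_mem_hbox (hR : 0 ≤ R) : (0 : Pt d) ∈ hbox ϑ R := fun s => by
  simpa [coord_zero] using Real.rpow_nonneg hR _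

lemma mem_hbox_of_hnorm_le (hϑ : 0 < ϑ) {z : Pt d} (h : hnorm ϑ z ≤ R) : z ∈ hbox ϑ R := by
  have ht : 0 ≤ |z.1| ^ (1 / ϑ) := by positivity
  have hx : 0 ≤ ‖z.2.1‖ ^ (1 / (ϑ + 1)) := by positivity
  have hv := norm_nonneg z.2.2
  have le_rpow {a q : ℝ} (ha : 0 ≤ a) (hq : 0 < q) (haR : a ^ (1 / q) ≤ R) : a ≤ R ^ q := by
    rw [one_div] at haR
    exact (Real.rpow_inv_le_iff_of_pos ha ((Real.rpow_nonneg ha _).trans haR) hq).1 haR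
  unfold hnorm at h
  rintro (_ | i | i)
  · change |z.1| ≤ R ^ ϑ
    exact le_rpow (abs_nonneg _) hϑ (by linarith)
  · change ‖z.2.1 i‖ ≤ R ^ (1 + ϑ)
    refine (PiLp.norm_apply_le z.2.1 i).trans (le_rpow (norm_nonneg _) (by positivity) ?_)
    rw [add_comm 1 ϑ]
    linarith
  · change ‖z.2.2 i‖ ≤ R ^ (1 : ℝ)
    rw [Real.rpow_one]
    exact (PiLp.norm_apply_le z.2.2 i).trans (by linarith)

/-- A factor by which a homogeneous box has to be enlarged to contain its images under the flows
for the times matching its radius. -/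
def boxGrowth (ϑ : ℝ) : ℝ := 2 ^ (1 + 1 / ϑ)

lemma one_le_boxGrowth (hϑ : 0 < ϑ) : 1 ≤ boxGrowth ϑ :=
  Real.one_le_rpow one_le_two (by positivity)

lemma two_le_boxGrowth_rpow (hϑ : 0 < ϑ) (s : Coord d) : 2 ≤ boxGrowth ϑ ^ hweight ϑ s := by
  rw [boxGrowth, ← Real.rpow_mul zero_le_two]
  refine Real.self_le_rpow_of_one_le one_le_two ?_
  have : 0 < 1 / ϑ := by positivity
  rcases s with s | s | s
  all_goals
    simp only [hweight, Sum.elim_inl, Sum.elim_inr, add_mul, mul_add, one_mul, mul_one,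
      one_div_mul_cancel hϑ.ne']
    linarith

lemma abs_eval_fieldCoeff_le (hR : 0 < R) (s r : Coord d) {z : Pt d} (hz : z ∈ hbox ϑ R) :
    |eval (coord z) (fieldCoeff s r)| ≤ R ^ (hweight ϑ r - hweight ϑ s) := by
  rcases s with s | s
  · rcases r with r | r | r
    · simp [fieldCoeff, hweight]
    · simpa [fieldCoeff, hweight] using hz (vc r)
    · simpa [fieldCoeff] using Real.rpow_nonneg hR.le _
  · by_cases h : r = .inr s
    · simp [fieldCoeff, h]
    · simpa [fieldCoeff, h] using Real.rpow_nonneg hR.le _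

lemma flow_mem_hbox (hϑ : 0 < ϑ) (hR : 0 < R) {s : Coord d} {z : Pt d} (hz : z ∈ hbox ϑ R)
    (hτ : |τ| ≤ R ^ hweight ϑ s) : flow s τ z ∈ hbox ϑ (boxGrowth ϑ * R) := fun r => by
  rw [coord_flow, Pi.add_apply, Pi.smul_apply, smul_eq_mul,
    Real.mul_rpow (zero_le_one.trans (one_le_boxGrowth hϑ)) hR.le]
  calc |coord z r + τ * eval (coord z) (fieldCoeff s r)|
      ≤ R ^ hweight ϑ r + R ^ hweight ϑ s * R ^ (hweight ϑ r - hweight ϑ s) := by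
        refine (abs_add_le _ _).trans (add_le_add (hz r) ?_)
        rw [abs_mul]
        gcongr
        exact abs_eval_fieldCoeff_le hR s r hz
    _ = 2 * R ^ hweight ϑ r := by
        rw [← Real.rpow_add hR, add_sub_cancel]
        ring
    _ ≤ boxGrowth ϑ ^ hweight ϑ r * R ^ hweight ϑ r := by
        gcongr
        exact two_le_boxGrowth_rpow hϑ r

end Geometry

/-! ### Polynomial approximation and its derivatives -/

section Approximation

variable {ϑ α C : ℝ} {U f : Pt d → ℝ} {P Q : Pol d} {A : Pt d → Pol d}

/-- The Lie derivative along the field with the given index (junk value if it does not exist). -/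
def lie (s : Coord d) (u : Pt d → ℝ) (z : Pt d) : ℝ := deriv (fun τ => u (flow s τ z)) 0

/-- `P` has weighted degree less than `α` and approximates `U` near the origin to homogeneous
order `α`, with constant `C`. -/
def IsApprox (ϑ α C : ℝ) (U : Pt d → ℝ) (P : Pol d) : Prop :=
  P ∈ weightLT (hweight ϑ) α ∧
    ∀ R, 0 < R → ∀ w ∈ hbox ϑ R, |U w - eval (coord w) P| ≤ C * R ^ α

/-- The polynomial `A z₀`, in the left-translated coordinates, approximates `f` near each point
`z₀` to homogeneous order `α`, with a constant independent of `z₀`. -/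
def IsApproxFamily (ϑ α : ℝ) (f : Pt d → ℝ) (A : Pt d → Pol d) : Prop :=
  ∃ C, ∀ z₀, IsApprox ϑ α C (fun w => f (gmul z₀ w)) (A z₀)

lemma le_mul_rpow_of_forall_gt {a ρ : ℝ} (hα : 0 ≤ α) (h : ∀ R > ρ, a ≤ C * R ^ α) :
    a ≤ C * ρ ^ α :=
  ge_of_tendsto (x := 𝓝[>] ρ)
    (((Real.continuousAt_rpow_const ρ α (Or.inr hα)).tendsto.const_mul C).mono_left
      nhdsWithin_le_nhds)
    (eventually_mem_nhdsWithin.mono h)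

lemma hasDerivAt_zero_of_abs_le_mul_rpow {e : ℝ → ℝ} {q : ℝ} (hq : 1 < q) (h0 : e 0 = 0)
    (h : ∀ τ, |e τ| ≤ C * |τ| ^ q) : HasDerivAt e 0 0 := by
  have small : (fun τ : ℝ => |τ| ^ (q - 1)) =o[𝓝 0] fun _ => (1 : ℝ) := by
    refine (Asymptotics.isLittleO_one_iff ℝ).2 ?_
    simpa [Real.zero_rpow (sub_pos.2 hq).ne'] using
      (continuous_abs.tendsto (0 : ℝ)).rpow_const (Or.inr (sub_pos.2 hq).le)
  have big : e =O[𝓝 0] fun τ => τ * |τ| ^ (q - 1) := .of_bound C <| .of_forall fun τ => by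
    rw [norm_mul, Real.norm_of_nonneg (Real.rpow_nonneg (abs_nonneg τ) _), Real.norm_eq_abs τ,
      ← Real.rpow_one_add' (abs_nonneg τ) (by linarith), add_sub_cancel]
    exact h τ
  refine .of_isLittleO ?_
  simpa [h0] using big.trans_isLittleO ((Asymptotics.isBigO_refl id _).mul_isLittleO small)

lemma hasDerivAt_eval_coord_flow (s : Coord d) (P : Pol d) (z : Pt d) (τ : ℝ) :
    HasDerivAt (fun r => eval (coord (flow s r z)) P)
      (eval (coord (flow s τ z)) (polyField s P)) τ := by
  refine hasDerivAt_eval_curve _ (fun r => ?_) P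
  rw [eval_fieldCoeff_flow]
  simp only [coord_flow, Pi.add_apply, Pi.smul_apply, smul_eq_mul]
  simpa using ((hasDerivAt_id τ).mul_const (eval (coord z) (fieldCoeff s r))).const_add (coord z r)

lemma polyField_mem_weightLT (hP : P ∈ weightLT (hweight ϑ) α) (s : Coord d) :
    polyField s P ∈ weightLT (hweight ϑ) (α - hweight ϑ s) :=
  mkDerivation_mem_weightLT (isWeightedHomogeneous_fieldCoeff ϑ s) hP

lemma exists_abs_polyField_sub_le (hϑ : 0 < ϑ) (α : ℝ) :
    ∃ K : ℝ, ∀ (s : Coord d) {P Q : Pol d}, P ∈ weightLT (hweight ϑ) α →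
      Q ∈ weightLT (hweight ϑ) α → ∀ (z z' : Pt d) {M ρ : ℝ}, 0 < ρ →
      (∀ τ, |τ| ≤ ρ → |eval (coord (flow s τ z)) P - eval (coord (flow s τ z')) Q| ≤ M) →
      |eval (coord z) (polyField s P) - eval (coord z') (polyField s Q)| ≤ K * M / ρ := by
  obtain ⟨K, markov⟩ := exists_abs_derivative_eval_le ⌈α / min 1 ϑ⌉₊
  refine ⟨K, fun s P Q hP hQ z z' M ρ hρ hM => ?_⟩
  have restrict {P : Pol d} (hP : P ∈ weightLT (hweight ϑ) α) (z : Pt d) :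
      ∃ p : Polynomial ℝ, p.natDegree ≤ ⌈α / min 1 ϑ⌉₊ ∧
        (∀ τ, p.eval τ = eval (coord (flow s τ z)) P) ∧
        p.derivative.eval 0 = eval (coord z) (polyField s P) := by
    obtain ⟨p, hdeg, hp⟩ := exists_natDegree_le_eval_line P (coord z)
      fun r => eval (coord z) (fieldCoeff s r)
    simp only [← coord_flow] at hp
    refine ⟨p, hdeg.trans (totalDegree_le_of_mem_weightLT (by positivity) (min_le_hweight hϑ) hP),
      hp, ?_⟩
    have := hasDerivAt_eval_coord_flow s P z 0
    simp only [← hp, flow_zero] at this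
    exact (p.hasDerivAt 0).unique this
  obtain ⟨p, hpdeg, hp, hp'⟩ := restrict hP z
  obtain ⟨q, hqdeg, hq, hq'⟩ := restrict hQ z'
  rw [← hp', ← hq', ← Polynomial.eval_sub, ← Polynomial.derivative_sub]
  refine markov (p - q) M ρ (Polynomial.natDegree_sub_le_of_le hpdeg hqdeg |>.trans (by simp)) hρ
    fun τ hτ => ?_
  rw [Polynomial.eval_sub, hp, hq]
  exact hM τ hτ

lemma IsApprox.apply_zero (hα : 0 < α) (h : IsApprox ϑ α C U P) : U 0 = constantCoeff P := by
  have := le_mul_rpow_of_forall_gt hα.le fun R hR => h.2 R hR 0 (zero_mem_hbox hR.le)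
  rw [Real.zero_rpow hα.ne', mul_zero, coord_zero, eval_zero] at this
  exact sub_eq_zero.1 (abs_nonpos_iff.1 this)

lemma IsApprox.abs_flow_sub_le (hϑ : 0 < ϑ) (h : IsApprox ϑ α C U P) {s : Coord d} {R τ : ℝ}
    (hR : 0 < R) {w : Pt d} (hw : w ∈ hbox ϑ R) (hτ : |τ| ≤ R ^ hweight ϑ s) :
    |U (flow s τ w) - eval (coord (flow s τ w)) P| ≤ C * boxGrowth ϑ ^ α * R ^ α := by
  have hb := zero_lt_one.trans_le (one_le_boxGrowth hϑ)
  rw [mul_assoc, ← Real.mul_rpow hb.le hR.le]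
  exact h.2 _ (mul_pos hb hR) _ (flow_mem_hbox hϑ hR hw hτ)

lemma IsApprox.hasDerivAt_flow (hϑ : 0 < ϑ) {s : Coord d} (hs : hweight ϑ s < α)
    (h : IsApprox ϑ α C U P) :
    HasDerivAt (fun τ => U (flow s τ 0)) (constantCoeff (polyField s P)) 0 := by
  have hω := hweight_pos hϑ s
  have remainder : HasDerivAt (fun τ => U (flow s τ 0) - eval (coord (flow s τ 0)) P) 0 0 := by
    refine hasDerivAt_zero_of_abs_le_mul_rpow (C := C * boxGrowth ϑ ^ α)
      ((one_lt_div hω).2 hs) ?_ fun τ => ?_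
    · rw [flow_zero, h.apply_zero (hω.trans hs), coord_zero, eval_zero, sub_self]
    · refine le_mul_rpow_of_forall_gt (div_pos (hω.trans hs) hω).le fun r hr => ?_
      have hr0 : 0 < r := (abs_nonneg τ).trans_lt hr
      have hrω : 0 < r ^ (hweight ϑ s)⁻¹ := Real.rpow_pos_of_pos hr0 _
      rw [div_eq_inv_mul, Real.rpow_mul hr0.le]
      refine h.abs_flow_sub_le hϑ hrω (zero_mem_hbox hrω.le) ?_
      rw [Real.rpow_inv_rpow hr0.le hω.ne']
      exact hr.le
  have polynomial := hasDerivAt_eval_coord_flow s P 0 0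
  rw [flow_zero, coord_zero, eval_zero] at polynomial
  simpa [Pi.add_def] using remainder.add polynomial

lemma IsApproxFamily.apply (hα : 0 < α) (h : IsApproxFamily ϑ α f A) (z : Pt d) :
    f z = constantCoeff (A z) := by
  obtain ⟨C, hC⟩ := h
  simpa only [gmul_zero] using (hC z).apply_zero hα

lemma IsApproxFamily.lie_apply (hϑ : 0 < ϑ) {s : Coord d} (hs : hweight ϑ s < α)
    (h : IsApproxFamily ϑ α f A) (z : Pt d) : lie s f z = constantCoeff (polyField s (A z)) := by
  obtain ⟨C, hC⟩ := h
  simpa only [← flow_gmul, gmul_zero, lie] using ((hC z).hasDerivAt_flow hϑ hs).deriv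

/-- On a flow line of length `R ^ hweight ϑ s` the two polynomials `A (z₀ ∘ w)` and `A z₀` differ
by `O(R ^ α)`, since both approximate `f`; Markov's inequality transfers this to derivatives. -/
lemma IsApproxFamily.lie_polyField (hϑ : 0 < ϑ) {s : Coord d} (hs : hweight ϑ s < α)
    (h : IsApproxFamily ϑ α f A) :
    IsApproxFamily ϑ (α - hweight ϑ s) (lie s f) fun z => polyField s (A z) := by
  have hlie := h.lie_apply hϑ hs
  obtain ⟨C, hC⟩ := h
  obtain ⟨K, markov⟩ := exists_abs_polyField_sub_le (d := d) hϑ α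
  refine ⟨K * (2 * (C * boxGrowth ϑ ^ α)), fun z₀ =>
    ⟨polyField_mem_weightLT (hC z₀).1 s, fun R hR w hw => ?_⟩⟩
  beta_reduce
  rw [hlie, ← eval_zero, ← coord_zero]
  calc _ ≤ K * (2 * (C * boxGrowth ϑ ^ α) * R ^ α) / R ^ hweight ϑ s := by
        refine markov s (hC _).1 (hC z₀).1 0 w (Real.rpow_pos_of_pos hR _) fun τ hτ => ?_
        have near := (hC (gmul z₀ w)).abs_flow_sub_le hϑ hR (zero_mem_hbox hR.le) hτ
        have far := (hC z₀).abs_flow_sub_le hϑ hR hw hτ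
        simp only [← flow_gmul, gmul_zero] at near far
        rw [abs_sub_comm] at near
        refine (abs_sub_le _ (f (flow s τ (gmul z₀ w))) _).trans ((add_le_add near far).trans ?_)
        linarith
    _ = K * (2 * (C * boxGrowth ϑ ^ α)) * R ^ (α - hweight ϑ s) := by
        rw [Real.rpow_sub hR]
        ring

end Approximation

/-! ### Identification of the Taylor polynomial -/

section Taylor

variable {ϑ α : ℝ} {f : Pt d → ℝ} {A : Pt d → Pol d}

/-- The factorial `m!` of a multi-index. -/
def multiFactorial (m : Coord d →₀ ℕ) : ℝ := ∏ s, ((m s).factorial : ℝ)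

/-- The multi-index counting the occurrences of each coordinate in a word of derivatives. -/
def wordExponent (l : List (Coord d)) : Coord d →₀ ℕ :=
  (l.map fun s => Finsupp.single s 1).sum

/-- The word of derivatives `Y^k ∂_v^β ∂_x^γ` for the Taylor index `(k, γ, β)`. -/
def taylorWord (p : ℕ × (Fin d → ℕ) × (Fin d → ℕ)) : List (Coord d) :=
  List.replicate p.1 tc ++ ((idxList p.2.2).map vc ++ (idxList p.2.1).map xc)

/-- The Taylor index `(k, γ, β)` as the exponent of a monomial `t^k x^γ v^β`. -/
def taylorExponent : ℕ × (Fin d → ℕ) × (Fin d → ℕ) ≃ (Coord d →₀ ℕ) where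
  toFun p := Finsupp.equivFunOnFinite.symm (Sum.elim (fun _ => p.1) (Sum.elim p.2.1 p.2.2))
  invFun m := (m tc, fun i => m (xc i), fun i => m (vc i))
  left_inv _ := rfl
  right_inv m := by ext (_ | _ | _) <;> rfl

lemma taylorExponent_apply (p : ℕ × (Fin d → ℕ) × (Fin d → ℕ)) :
    ⇑(taylorExponent p) = Sum.elim (fun _ => p.1) (Sum.elim p.2.1 p.2.2) := rfl

lemma multiFactorial_pos (m : Coord d →₀ ℕ) : 0 < multiFactorial m :=
  Finset.prod_pos fun _ _ => by positivity

lemma multiFactorial_add_single (m : Coord d →₀ ℕ) (s : Coord d) :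
    multiFactorial (m + Finsupp.single s 1) = (m s + 1) * multiFactorial m := by
  have split (r : Coord d) : ((m r + Finsupp.single s 1 r).factorial : ℝ) =
      (if s = r then (m s + 1 : ℝ) else 1) * (m r).factorial := by
    split_ifs with h
    · subst h
      simp [Nat.factorial_succ]
    · simp [Finsupp.single_eq_of_ne' h]
  simp only [multiFactorial, Finsupp.add_apply, split, Finset.prod_mul_distrib,
    Finset.prod_ite_eq, Finset.mem_univ, if_true]

lemma polyField_inr (r : Fin d ⊕ Fin d) : polyField (.inr r) = pderiv (R := ℝ) (.inr r) :=
  derivation_ext fun s => by rw [polyField, mkDerivation_X, pderiv_def, mkDerivation_X, fieldCoeff]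

lemma polyField_tc (P : Pol d) :
    polyField tc P = pderiv tc P + ∑ i, X (vc i) * pderiv (xc i) P := by
  have sum_apply (Q : Pol d) : (∑ i, (X (vc i) : Pol d) • pderiv (R := ℝ) (xc i)) Q =
      ∑ i, X (vc i) * pderiv (xc i) Q :=
    (congrFun (map_sum Derivation.coeFnAddMonoidHom
      (fun i : Fin d => (X (vc i) : Pol d) • pderiv (R := ℝ) (xc i)) Finset.univ) Q).trans
      (Finset.sum_apply _ _ _)
  have : polyField tc = pderiv tc + ∑ i : Fin d, (X (vc i) : Pol d) • pderiv (R := ℝ) (xc i) :=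
    derivation_ext fun s => by
      rcases s with _ | j | j <;>
        simp [polyField, mkDerivation_X, fieldCoeff, sum_apply, pderiv_X, Pi.single_apply]
  rw [this, Derivation.add_apply, sum_apply]

/-- `Y` differs from `∂_t` by terms divisible by some `v_i`. -/
lemma multiFactorial_mul_coeff_polyField {s : Coord d} {m : Coord d →₀ ℕ}
    (h : s = tc → ∀ i, m (vc i) = 0) (P : Pol d) :
    multiFactorial m * coeff m (polyField s P) =
      multiFactorial (m + Finsupp.single s 1) * coeff (m + Finsupp.single s 1) P := by
  have : coeff m (polyField s P) = coeff m (pderiv s P) := by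
    rcases s with _ | r
    · rw [polyField_tc, coeff_add, coeff_sum, Finset.sum_eq_zero, add_zero]
      intro i _
      rw [coeff_X_mul', if_neg]
      simpa using h rfl i
    · rw [polyField_inr]
  rw [this, coeff_pderiv, multiFactorial_add_single]
  ring

lemma wordExponent_nil : wordExponent ([] : List (Coord d)) = 0 := by
  simp [wordExponent]

lemma wordExponent_cons (s : Coord d) (l : List (Coord d)) :
    wordExponent (s :: l) = Finsupp.single s 1 + wordExponent l := by
  simp [wordExponent]

lemma multiFactorial_mul_coeff_foldr_polyField {l : List (Coord d)}
    (hl : l.Pairwise fun s r => r = tc → s = tc) (P : Pol d) (m : Coord d →₀ ℕ)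
    (hm : tc ∈ l → ∀ i, m (vc i) = 0) :
    multiFactorial m * coeff m (l.foldr (fun s => polyField s) P) =
      multiFactorial (m + wordExponent l) * coeff (m + wordExponent l) P := by
  induction l generalizing m with
  | nil => simp [wordExponent_nil]
  | cons s l ih =>
    obtain ⟨hs, hl⟩ := List.pairwise_cons.1 hl
    rw [List.foldr_cons, multiFactorial_mul_coeff_polyField fun h => hm (by simp [h]),
      ih hl, wordExponent_cons, add_assoc]
    intro htc i
    have : s = tc := hs _ htc rfl
    simpa [this] using hm (by simp [this]) i

lemma constantCoeff_foldr_polyField {l : List (Coord d)}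
    (hl : l.Pairwise fun s r => r = tc → s = tc) (P : Pol d) :
    constantCoeff (l.foldr (fun s => polyField s) P) =
      multiFactorial (wordExponent l) * coeff (wordExponent l) P := by
  simpa [multiFactorial, constantCoeff_eq] using
    multiFactorial_mul_coeff_foldr_polyField hl P 0 (by simp)

lemma IsApproxFamily.foldr_lie (hϑ : 0 < ϑ) (h : IsApproxFamily ϑ α f A) {l : List (Coord d)}
    (hl : Finsupp.weight (hweight ϑ) (wordExponent l) < α) :
    IsApproxFamily ϑ (α - Finsupp.weight (hweight ϑ) (wordExponent l)) (l.foldr lie f)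
      fun z => l.foldr (fun s => polyField s) (A z) := by
  induction l with
  | nil => simpa [wordExponent_nil] using h
  | cons s l ih =>
    have hs := hweight_pos hϑ s
    have weight_cons : Finsupp.weight (hweight ϑ) (wordExponent (s :: l)) =
        Finsupp.weight (hweight ϑ) (wordExponent l) + hweight ϑ s := by
      rw [wordExponent_cons, map_add, Finsupp.weight_single, one_smul, add_comm]
    rw [weight_cons] at hl ⊢
    rw [← sub_sub]
    exact (ih (by linarith)).lie_polyField hϑ (by linarith)

lemma foldr_lie_taylorWord (p : ℕ × (Fin d → ℕ) × (Fin d → ℕ)) (u : Pt d → ℝ) :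
    (taylorWord p).foldr lie u = lieY^[p.1] (dvPow p.2.2 (dxPow p.2.1 u)) := by
  have derivList_eq (c : Fin d → Coord d) (l : List (Fin d)) (u : Pt d → ℝ) :
      (l.map c).foldr lie u = derivList (fun i => lie (c i)) l u := by
    induction l with
    | nil => rfl
    | cons i l ih => simp [derivList, ih]
  have iterate_eq (k : ℕ) (u : Pt d → ℝ) : (List.replicate k tc).foldr lie u = lieY^[k] u := by
    induction k with
    | zero => rfl
    | succ k ih =>
      rw [List.replicate_succ, List.foldr_cons, ih, Function.iterate_succ_apply']
      rfl
  rw [taylorWord, List.foldr_append, List.foldr_append, derivList_eq, derivList_eq, iterate_eq]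
  rfl

lemma pairwise_taylorWord (p : ℕ × (Fin d → ℕ) × (Fin d → ℕ)) :
    (taylorWord p).Pairwise fun s r => r = tc → s = tc := by
  simp [taylorWord, List.pairwise_append, List.pairwise_map, List.pairwise_of_forall]

lemma wordExponent_taylorWord (p : ℕ × (Fin d → ℕ) × (Fin d → ℕ)) :
    wordExponent (taylorWord p) = taylorExponent p := by
  have exponent_idxList (c : Fin d → Coord d) (β : Fin d → ℕ) :
      wordExponent ((idxList β).map c) = ∑ i, Finsupp.single (c i) (β i) := by
    simp [wordExponent, idxList, List.map_flatten, List.sum_flatten, List.map_ofFn, List.sum_ofFn]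
  have exponent_append (l l' : List (Coord d)) :
      wordExponent (l ++ l') = wordExponent l + wordExponent l' := by
    simp [wordExponent]
  have exponent_replicate :
      wordExponent (List.replicate p.1 tc) = Finsupp.single (tc : Coord d) p.1 := by
    simp [wordExponent]
  rw [taylorWord, exponent_append, exponent_append, exponent_idxList, exponent_idxList,
    exponent_replicate]
  ext (_ | _ | _) <;> simp [taylorExponent_apply, Finsupp.single_apply]

lemma multiFactorial_taylorExponent (p : ℕ × (Fin d → ℕ) × (Fin d → ℕ)) :
    multiFactorial (taylorExponent p) = (p.1.factorial : ℝ) *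
      (∏ i, ((p.2.1 i).factorial : ℝ)) * (∏ i, ((p.2.2 i).factorial : ℝ)) := by
  simp [multiFactorial, taylorExponent_apply, Fintype.prod_sum_type, mul_assoc]

lemma weight_taylorExponent (ϑ : ℝ) (p : ℕ × (Fin d → ℕ) × (Fin d → ℕ)) :
    Finsupp.weight (hweight ϑ) (taylorExponent p) = ϑ * (p.1 : ℝ) +
      (1 + ϑ) * ((∑ i, p.2.1 i : ℕ) : ℝ) + ((∑ i, p.2.2 i : ℕ) : ℝ) := by
  simp [Finsupp.weight_apply, Finsupp.sum_fintype, taylorExponent_apply, hweight,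
    Fintype.sum_sum_type, Finset.mul_sum, add_assoc, mul_comm]

lemma mem_taylorIdx_iff (hϑ : 0 < ϑ) {p : ℕ × (Fin d → ℕ) × (Fin d → ℕ)} :
    p ∈ taylorIdx ϑ α d ↔ Finsupp.weight (hweight ϑ) (taylorExponent p) < α := by
  rw [taylorIdx, Finset.mem_filter, weight_taylorExponent, and_iff_right_iff_imp]
  intro hp
  have hk : (0 : ℝ) ≤ ϑ * p.1 := by positivity
  have hγ : (0 : ℝ) ≤ ϑ * (∑ i, p.2.1 i : ℕ) := by positivity
  have lt_ceil_add_one (g : Fin d → ℕ) (hg : ((∑ i, g i : ℕ) : ℝ) < α) (i : Fin d) :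
      g i < ⌈α⌉₊ + 1 :=
    ((Finset.single_le_sum (fun _ _ => Nat.zero_le _) (Finset.mem_univ i)).trans_lt
      (Nat.lt_ceil.2 hg)).trans (Nat.lt_succ_self _)
  simp only [Finset.mem_product, Fintype.mem_piFinset, Finset.mem_range]
  refine ⟨?_, lt_ceil_add_one _ (by linarith), lt_ceil_add_one _ (by linarith)⟩
  have : p.1 < ⌈α / ϑ⌉₊ := by
    rw [Nat.lt_ceil, lt_div_iff₀ hϑ]
    linarith
  omega

lemma IsApproxFamily.lie_eq_multiFactorial_mul_coeff (hϑ : 0 < ϑ) (h : IsApproxFamily ϑ α f A)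
    {p : ℕ × (Fin d → ℕ) × (Fin d → ℕ)} (hp : p ∈ taylorIdx ϑ α d) (z : Pt d) :
    lieY^[p.1] (dvPow p.2.2 (dxPow p.2.1 f)) z =
      multiFactorial (taylorExponent p) * coeff (taylorExponent p) (A z) := by
  rw [mem_taylorIdx_iff hϑ, ← wordExponent_taylorWord] at hp
  rw [← foldr_lie_taylorWord, (h.foldr_lie hϑ hp).apply (sub_pos.2 hp),
    constantCoeff_foldr_polyField (pairwise_taylorWord p), wordExponent_taylorWord]

lemma coord_gmul_ginv (z₀ z : Pt d) : coord (gmul (ginv z₀) z) = Sum.elim (fun _ => z.1 - z₀.1)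
    (Sum.elim (fun i => z.2.1 i - z₀.2.1 i - (z.1 - z₀.1) * z₀.2.2 i)
      fun i => z.2.2 i - z₀.2.2 i) := by
  ext (_ | _ | _) <;>
    simp only [coord, gmul, ginv, Sum.elim_inl, Sum.elim_inr, PiLp.add_apply, PiLp.sub_apply,
      PiLp.neg_apply, PiLp.smul_apply, smul_eq_mul] <;> ring

lemma IsApproxFamily.taylorPoly_eq (hϑ : 0 < ϑ) (h : IsApproxFamily ϑ α f A) (z₀ z : Pt d) :
    taylorPoly ϑ α f z₀ z = eval (coord (gmul (ginv z₀) z)) (A z₀) := by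
  have hA : A z₀ ∈ weightLT (hweight ϑ) α := h.elim fun C hC => (hC z₀).1
  have support_subset :
      (A z₀).support ⊆ (taylorIdx ϑ α d).map taylorExponent.toEmbedding := fun m hm => by
    rw [Finset.mem_map_equiv, mem_taylorIdx_iff hϑ, Equiv.apply_symm_apply]
    exact mem_weightLT_iff.1 hA m (mem_support_iff.1 hm)
  rw [eval_eq', Finset.sum_subset support_subset fun m _ hm => by
    rw [notMem_support_iff.1 hm, zero_mul], Finset.sum_map]
  refine Finset.sum_congr rfl fun p hp => ?_
  rw [h.lie_eq_multiFactorial_mul_coeff hϑ hp, ← multiFactorial_taylorExponent,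
    mul_div_cancel_left₀ _ (multiFactorial_pos _).ne']
  simp [Fintype.prod_sum_type, taylorExponent_apply, coord_gmul_ginv, mul_assoc]

end Taylor

/-! ### Integration along horizontal paths -/

section Paths

variable {ϑ α K R l : ℝ} {U : Pt d → ℝ} {F : Coord d → Pol d}

/-- The fields `Y` and `∂_{v_i}`, i.e. those along which Hölder regularity is prescribed. -/
def IsHorizontal (s : Coord d) : Prop := ∀ i, s ≠ xc i

/-- `F` has weighted degree less than `α` and its increments along the flow of the field with
index `s` approximate those of `U` to homogeneous order `α`, with constant `K`. -/
def IsApproxAlong (ϑ α K : ℝ) (s : Coord d) (U : Pt d → ℝ) (F : Pol d) : Prop :=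
  F ∈ weightLT (hweight ϑ) α ∧ ∀ R, 0 < R → ∀ w ∈ hbox ϑ R, ∀ τ, |τ| ≤ R ^ hweight ϑ s →
    |(U (flow s τ w) - eval (coord (flow s τ w)) F) - (U w - eval (coord w) F)| ≤ K * R ^ α

/-- The endpoint of the path which starts at a given point and follows, for each pair `(s, τ)` of
a list, the field with index `s` for the time `τ`. -/
def endpoint : List (Coord d × ℝ) → Pt d → Pt d
  | [], z => z
  | a :: L, z => endpoint L (flow a.1 a.2 z)

/-- The sum along a path of the increments of `F s` on the legs following the field `s`. -/
def increment (F : Coord d → Pol d) : List (Coord d × ℝ) → Pt d → ℝ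
  | [], _ => 0
  | a :: L, z => eval (coord (flow a.1 a.2 z)) (F a.1) - eval (coord z) (F a.1) +
      increment F L (flow a.1 a.2 z)

/-- The path obtained by applying a homogeneous dilation to all the legs of a path. -/
def dilatePath (ϑ l : ℝ) (L : List (Coord d × ℝ)) : List (Coord d × ℝ) :=
  L.map fun a => (a.1, l ^ hweight ϑ a.1 * a.2)

lemma endpoint_append (L L' : List (Coord d × ℝ)) (z : Pt d) :
    endpoint (L ++ L') z = endpoint L' (endpoint L z) := by
  induction L generalizing z with
  | nil => rfl
  | cons _ _ ih => exact ih _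

lemma abs_sub_increment_le (hϑ : 0 < ϑ) {L : List (Coord d × ℝ)}
    (hF : ∀ a ∈ L, IsApproxAlong ϑ α K a.1 U (F a.1)) {z : Pt d} (hR : 0 < R) (hz : z ∈ hbox ϑ R)
    (hL : ∀ a ∈ L, |a.2| ≤ R ^ hweight ϑ a.1) :
    |U (endpoint L z) - U z - increment F L z| ≤
      (∑ i ∈ Finset.range L.length, (boxGrowth ϑ ^ α) ^ i) * K * R ^ α := by
  induction L generalizing R z with
  | nil => simp [endpoint, increment]
  | cons a L ih =>
    simp only [List.forall_mem_cons] at hF hL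
    have hb := one_le_boxGrowth hϑ
    have first := hF.1.2 R hR z hz a.2 hL.1
    have rest := ih hF.2 (mul_pos (zero_lt_one.trans_le hb) hR) (flow_mem_hbox hϑ hR hz hL.1)
      fun b hb' => (hL.2 b hb').trans <|
        Real.rpow_le_rpow hR.le (le_mul_of_one_le_left hR.le hb) (hweight_pos hϑ _).le
    rw [Real.mul_rpow (by linarith) hR.le] at rest
    rw [List.length_cons, geom_sum_succ, endpoint, increment]
    calc _ = |(U (flow a.1 a.2 z) - eval (coord (flow a.1 a.2 z)) (F a.1) -
            (U z - eval (coord z) (F a.1))) +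
          (U (endpoint L (flow a.1 a.2 z)) - U (flow a.1 a.2 z) -
            increment F L (flow a.1 a.2 z))| := by congr 1; ring
      _ ≤ _ := (abs_add_le _ _).trans (add_le_add first rest)
      _ = _ := by ring

lemma endpoint_dilatePath (hl : 0 < l) (L : List (Coord d × ℝ)) (z : Pt d) :
    endpoint (dilatePath ϑ l L) (dilation ϑ l z) = dilation ϑ l (endpoint L z) := by
  induction L generalizing z with
  | nil => rfl
  | cons a L ih =>
    simp only [dilatePath, List.map_cons, endpoint, ← dilation_flow hl]
    exact ih _

lemma endpoint_dilatePath_zero (hl : 0 < l) (L : List (Coord d × ℝ)) :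
    endpoint (dilatePath ϑ l L) 0 = dilation ϑ l (endpoint L 0) := by
  simpa only [dilation_zero] using endpoint_dilatePath (ϑ := ϑ) hl L 0

lemma increment_dilatePath_mem_rpowSpan {L : List (Coord d × ℝ)}
    (hF : ∀ a ∈ L, F a.1 ∈ weightLT (hweight ϑ) α) (z : Pt d) :
    (fun l : Set.Ioi (0 : ℝ) => increment F (dilatePath ϑ l L) (dilation ϑ l z)) ∈
      rpowSpan α := by
  induction L generalizing z with
  | nil => exact zero_mem _
  | cons a L ih =>
    simp only [List.forall_mem_cons] at hF
    have eval_mem (z : Pt d) := eval_dilation_mem_rpowSpan hF.1 (coord z)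
    convert add_mem (sub_mem (eval_mem (flow a.1 a.2 z)) (eval_mem z))
      (ih hF.2 (flow a.1 a.2 z)) using 2 with l
    simp only [dilatePath, List.map_cons, increment, ← dilation_flow l.2, coord_dilation,
      Pi.add_apply, Pi.sub_apply]

lemma exists_forall_abs_le_rpow (hϑ : 0 < ϑ) (L : List (Coord d × ℝ)) :
    ∃ R > 0, ∀ a ∈ L, |a.2| ≤ R ^ hweight ϑ a.1 :=
  ((eventually_gt_atTop 0).and ((eventually_all_finite L.finite_toSet).2 fun a _ =>
    (tendsto_rpow_atTop (hweight_pos hϑ a.1)).eventually_ge_atTop |a.2|)).exists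

lemma exists_abs_sub_increment_dilatePath_le (hϑ : 0 < ϑ) {L : List (Coord d × ℝ)}
    (hF : ∀ a ∈ L, IsApproxAlong ϑ α K a.1 U (F a.1)) :
    ∃ C, ∀ l > 0,
      |U (dilation ϑ l (endpoint L 0)) - U 0 - increment F (dilatePath ϑ l L) 0| ≤ C * l ^ α := by
  obtain ⟨R, hR, hL⟩ := exists_forall_abs_le_rpow hϑ L
  refine ⟨(∑ i ∈ Finset.range L.length, (boxGrowth ϑ ^ α) ^ i) * K * R ^ α, fun l hl => ?_⟩
  have bound := abs_sub_increment_le hϑ (U := U) (L := dilatePath ϑ l L)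
    (List.forall_mem_map.2 hF) (mul_pos hl hR) (zero_mem_hbox (mul_pos hl hR).le)
    (List.forall_mem_map.2 fun a ha => by
      rw [abs_mul, Real.mul_rpow hl.le hR.le, abs_of_pos (Real.rpow_pos_of_pos hl _)]
      exact mul_le_mul_of_nonneg_left (hL a ha) (Real.rpow_nonneg hl.le _))
  rw [endpoint_dilatePath_zero hl, Real.mul_rpow hl.le hR.le, dilatePath, List.length_map] at bound
  exact bound.trans_eq (by ring)

/-- Under dilations the two increments are sums of powers `l ^ s` with `s < α` which agree up to
`O(l ^ α)`. -/
lemma increment_eq_of_endpoint_eq (hϑ : 0 < ϑ) {L L' : List (Coord d × ℝ)}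
    (hF : ∀ a ∈ L, IsApproxAlong ϑ α K a.1 U (F a.1))
    (hF' : ∀ a ∈ L', IsApproxAlong ϑ α K a.1 U (F a.1)) (h : endpoint L 0 = endpoint L' 0) :
    increment F L 0 = increment F L' 0 := by
  obtain ⟨C, hC⟩ := exists_abs_sub_increment_dilatePath_le hϑ hF
  obtain ⟨C', hC'⟩ := exists_abs_sub_increment_dilatePath_le hϑ hF'
  have mem := sub_mem (increment_dilatePath_mem_rpowSpan (fun a ha => (hF a ha).1) 0)
    (increment_dilatePath_mem_rpowSpan (fun a ha => (hF' a ha).1) 0)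
  have difference_zero := eq_zero_of_mem_rpowSpan (C := C' + C) mem fun l _ => by
    simp only [Pi.sub_apply, dilation_zero]
    have := (abs_sub _ _).trans (add_le_add (hC' l l.2) (hC l l.2))
    rw [h, sub_sub_sub_cancel_left] at this
    exact this.trans_eq (by ring)
  have at_one := congrFun difference_zero ⟨1, Set.mem_Ioi.2 one_pos⟩
  simpa [dilatePath, dilation_zero, sub_eq_zero] using at_one

/-- Polynomial functions of a point. -/
def polyFun (d : ℕ) : Subalgebra ℝ (Pt d → ℝ) :=
  Algebra.adjoin ℝ (Set.range fun s z => coord z s)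

lemma exists_eval_eq_of_mem_polyFun {g : Pt d → ℝ} (hg : g ∈ polyFun d) :
    ∃ P : Pol d, ∀ z, eval (coord z) P = g z := by
  rw [polyFun, Algebra.adjoin_range_eq_range_aeval] at hg
  obtain ⟨P, rfl⟩ := hg
  refine ⟨P, fun z => ?_⟩
  induction P using MvPolynomial.induction_on <;> simp_all

lemma coord_mem_polyFun (s : Coord d) : (fun z => coord z s) ∈ polyFun d :=
  Algebra.subset_adjoin ⟨s, rfl⟩

lemma eval_coord_mem_polyFun {q : Pt d → Pt d} (hq : ∀ s, (fun z => coord (q z) s) ∈ polyFun d)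
    (P : Pol d) : (fun z => eval (coord (q z)) P) ∈ polyFun d := by
  induction P using MvPolynomial.induction_on with
  | C a =>
    simp only [eval_C]
    exact (polyFun d).algebraMap_mem a
  | add P Q hP hQ =>
    simp only [map_add]
    exact add_mem hP hQ
  | mul_X P s hP =>
    simp only [map_mul, eval_X]
    exact mul_mem hP (hq s)

lemma increment_mem_polyFun (F : Coord d → Pol d) {L : List (Coord d × (Pt d → ℝ))}
    (hL : ∀ a ∈ L, a.2 ∈ polyFun d) {q : Pt d → Pt d}
    (hq : ∀ s, (fun z => coord (q z) s) ∈ polyFun d) :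
    (fun z => increment F (L.map fun a => (a.1, a.2 z)) (q z)) ∈ polyFun d := by
  induction L generalizing q with
  | nil => exact zero_mem _
  | cons a L ih =>
    simp only [List.forall_mem_cons] at hL
    have hflow (s : Coord d) : (fun z => coord (flow a.1 (a.2 z) (q z)) s) ∈ polyFun d := by
      simp only [coord_flow]
      exact add_mem (hq s) (mul_mem hL.1 (eval_coord_mem_polyFun hq _))
    exact add_mem (sub_mem (eval_coord_mem_polyFun hflow (F a.1))
      (eval_coord_mem_polyFun hq (F a.1))) (ih hL.2 hflow)

/-- A horizontal path from the origin to a variable point `(t, x, v)`: first `t` is reached along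
`Y`, then each `x_i` by the commutator of the flows of `∂_{v_i}` and `Y` for the times `r` and
`x_i / r`, then each `v_i` along `∂_{v_i}`. -/
def commutatorPath (d : ℕ) (r : ℝ) : List (Coord d × (Pt d → ℝ)) :=
  (tc, fun z => z.1) :: ((List.finRange d).flatMap (fun i =>
    [(vc i, fun _ => r), (tc, fun z => z.2.1 i / r),
      (vc i, fun _ => -r), (tc, fun z => -(z.2.1 i / r))]) ++
    (List.finRange d).map fun i => (vc i, fun z => z.2.2 i))

/-- The path `commutatorPath d r` to the point `z`. -/
def pathTo (r : ℝ) (z : Pt d) : List (Coord d × ℝ) :=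
  (commutatorPath d r).map fun a => (a.1, a.2 z)

lemma forall_mem_commutatorPath {r : ℝ} {p : Coord d × (Pt d → ℝ) → Prop} :
    (∀ a ∈ commutatorPath d r, p a) ↔ p (tc, fun z => z.1) ∧
      ∀ i, (p (vc i, fun _ => r) ∧ p (tc, fun z => z.2.1 i / r) ∧
        p (vc i, fun _ => -r) ∧ p (tc, fun z => -(z.2.1 i / r))) ∧ p (vc i, fun z => z.2.2 i) := by
  simp [commutatorPath, or_imp, forall_and, and_assoc]

lemma isHorizontal_of_mem_pathTo {r : ℝ} {z : Pt d} : ∀ a ∈ pathTo r z, IsHorizontal a.1 :=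
  List.forall_mem_map.2 <| forall_mem_commutatorPath.2 <| by simp [IsHorizontal]

lemma mem_polyFun_of_mem_commutatorPath {r : ℝ} : ∀ a ∈ commutatorPath d r, a.2 ∈ polyFun d := by
  have hx (i : Fin d) : (fun z => z.2.1 i / r) ∈ polyFun d := by
    simp only [div_eq_inv_mul]
    exact (polyFun d).smul_mem (coord_mem_polyFun (xc i)) r⁻¹
  refine forall_mem_commutatorPath.2 ⟨coord_mem_polyFun tc, fun i => ⟨⟨?_, ?_, ?_, ?_⟩, ?_⟩⟩
  · exact (polyFun d).algebraMap_mem r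
  · exact hx i
  · exact (polyFun d).algebraMap_mem (-r)
  · exact neg_mem (hx i)
  · exact coord_mem_polyFun (vc i)

lemma length_pathTo (r : ℝ) (z : Pt d) : (pathTo r z).length = 1 + 5 * d := by
  simp only [pathTo, commutatorPath, List.length_map, List.length_cons, List.length_append,
    List.length_flatMap, List.length_nil, List.map_const', List.sum_replicate,
    List.length_finRange, smul_eq_mul]
  ring

lemma endpoint_commutator {r : ℝ} (hr : r ≠ 0) (i : Fin d) (a t : ℝ)
    (x : EuclideanSpace ℝ (Fin d)) :
    endpoint [(vc i, r), (tc, a / r), (vc i, -r), (tc, -(a / r))] (t, x, 0) =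
      (t, x + a • EuclideanSpace.single i 1, 0) := by
  simp only [endpoint, flow, flowY, flowZ]
  refine Prod.ext (by simp) (Prod.ext ?_ (by simp))
  simp [smul_smul, div_mul_cancel₀ _ hr]

lemma endpoint_pathTo {r : ℝ} (hr : r ≠ 0) (z : Pt d) : endpoint (pathTo r z) 0 = z := by
  have sum_coord (x : EuclideanSpace ℝ (Fin d)) :
      ((List.finRange d).map fun i => x i • EuclideanSpace.single i (1 : ℝ)).sum = x := by
    rw [← Fin.sum_univ_def]
    ext k
    simp [Pi.single_apply]
  have commutators (l : List (Fin d)) (t : ℝ) (x : EuclideanSpace ℝ (Fin d)) :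
      endpoint (l.flatMap fun i => [(vc i, r), (tc, z.2.1 i / r), (vc i, -r),
        (tc, -(z.2.1 i / r))]) (t, x, 0) =
      (t, x + (l.map fun i => z.2.1 i • EuclideanSpace.single i (1 : ℝ)).sum, 0) := by
    induction l generalizing x with
    | nil => simp [endpoint]
    | cons i l ih =>
      rw [List.flatMap_cons, endpoint_append, endpoint_commutator hr, ih, List.map_cons,
        List.sum_cons, add_assoc]
  have velocities (l : List (Fin d)) (t : ℝ) (x v : EuclideanSpace ℝ (Fin d)) :
      endpoint (l.map fun i => (vc i, z.2.2 i)) (t, x, v) =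
        (t, x, v + (l.map fun i => z.2.2 i • EuclideanSpace.single i (1 : ℝ)).sum) := by
    induction l generalizing v with
    | nil => simp [endpoint]
    | cons i l ih =>
      rw [List.map_cons, endpoint]
      exact (ih _).trans (by simp [add_assoc])
  have drift : flow tc z.1 (0 : Pt d) = (z.1, 0, 0) := by simp [flow, flowY]
  simp only [pathTo, commutatorPath, List.map_cons, List.map_append, List.map_flatMap,
    List.map_map, Function.comp_def, List.map_nil]
  rw [endpoint, endpoint_append, drift, commutators, velocities, sum_coord, sum_coord]
  simp

lemma abs_le_rpow_of_mem_pathTo (hR : 0 < R) {z : Pt d} (hz : z ∈ hbox ϑ R) :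
    ∀ a ∈ pathTo R z, |a.2| ≤ R ^ hweight ϑ a.1 := by
  have hx (i : Fin d) : |z.2.1 i| / R ≤ R ^ ϑ := by
    have : |z.2.1 i| ≤ R ^ (1 + ϑ) := hz (xc i)
    rw [Real.rpow_add hR, Real.rpow_one] at this
    rwa [div_le_iff₀' hR]
  refine List.forall_mem_map.2 <| forall_mem_commutatorPath.2 ⟨hz tc, fun i => ⟨?_, hz (vc i)⟩⟩
  simp [hweight, abs_div, abs_of_pos hR, hx]

/-- The increment along `pathTo r z` is a polynomial in `z` for `r = 1`; by path independence it
scales like a sum of powers less than `α`, and it can be estimated along `pathTo R z` instead. -/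
theorem exists_isApprox_of_isApproxAlong (hϑ : 0 < ϑ) (hα : 0 < α)
    (hF : ∀ s, IsHorizontal s → IsApproxAlong ϑ α K s U (F s)) :
    ∃ P, IsApprox ϑ α ((∑ i ∈ Finset.range (1 + 5 * d), (boxGrowth ϑ ^ α) ^ i) * K) U P := by
  have hpath (r : ℝ) (z : Pt d) : ∀ a ∈ pathTo r z, IsApproxAlong ϑ α K a.1 U (F a.1) :=
    fun a ha => hF _ (isHorizontal_of_mem_pathTo a ha)
  obtain ⟨P, hP⟩ := exists_eval_eq_of_mem_polyFun <|
    add_mem ((polyFun d).algebraMap_mem (U 0)) <|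
      increment_mem_polyFun F (mem_polyFun_of_mem_commutatorPath (r := 1)) (q := fun _ => 0)
        fun s => by
          simp only [coord_zero]
          exact zero_mem _
  replace hP (z : Pt d) : eval (coord z) P = U 0 + increment F (pathTo 1 z) 0 := hP z
  refine ⟨P, mem_weightLT_of_forall_eval_dilation fun x => ?_, fun R hR z hz => ?_⟩
  · obtain ⟨z, rfl⟩ := coord_surjective x
    convert add_mem ((rpowSpan α).smul_mem (U 0) (rpow_mem_rpowSpan hα))
      (increment_dilatePath_mem_rpowSpan (fun a ha => (hpath 1 z a ha).1) 0) using 2 with l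
    rw [← coord_dilation, hP, increment_eq_of_endpoint_eq hϑ (L' := dilatePath ϑ l (pathTo 1 z))
      (hpath 1 _) (List.forall_mem_map.2 (hpath 1 z))]
    · simp [dilation_zero]
    · rw [endpoint_dilatePath_zero l.2, endpoint_pathTo one_ne_zero, endpoint_pathTo one_ne_zero]
  · rw [hP, increment_eq_of_endpoint_eq hϑ (hpath 1 z) (hpath R z)
      (by rw [endpoint_pathTo one_ne_zero, endpoint_pathTo hR.ne']), ← sub_sub]
    have bound := abs_sub_increment_le hϑ (hpath R z) hR (zero_mem_hbox hR.le)
      (abs_le_rpow_of_mem_pathTo hR hz)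
    rwa [endpoint_pathTo hR.ne', length_pathTo] at bound

end Paths

/-! ### Approximation of intrinsically Hölder functions -/

section Holder

variable {ϑ α M K K' : ℝ} {n : ℕ} {s : Coord d} {u U : Pt d → ℝ} {F Q : Pol d}

/-- The Hölder seminorm of order `α` along the field with index `s`; it is `semiY` or `semiZ` for
horizontal fields. -/
def seminormAlong (ϑ : ℝ) (s : Coord d) (α : ℝ) (u : Pt d → ℝ) : ℝ≥0∞ :=
  ⨆ (z : Pt d) (τ : ℝ) (_ : τ ≠ 0),
    ENNReal.ofReal (|u (flow s τ z) - u z| / |τ| ^ (α / hweight ϑ s))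

lemma seminormAlong_vc (ϑ α : ℝ) (i : Fin d) (u : Pt d → ℝ) :
    seminormAlong ϑ (vc i) α u = semiZ i α u := by
  simp [seminormAlong, semiZ, hweight, flow]

lemma abs_flow_sub_le_of_seminormAlong_le {N : ℝ≥0∞} (hN : N ≠ ⊤)
    (h : seminormAlong ϑ s α u ≤ N) (z : Pt d) (τ : ℝ) :
    |u (flow s τ z) - u z| ≤ N.toReal * |τ| ^ (α / hweight ϑ s) := by
  simp only [seminormAlong, iSup_le_iff] at h
  rcases eq_or_ne τ 0 with rfl | hτ
  · rw [flow_zero, sub_self, abs_zero]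
    positivity
  · have := h z τ hτ
    rwa [ENNReal.ofReal_le_iff_le_toReal hN,
      div_le_iff₀ (Real.rpow_pos_of_pos (abs_pos.2 hτ) _)] at this

lemma isApproxAlong_zero_of_seminormAlong_le (hϑ : 0 < ϑ) (hα : 0 ≤ α) {N : ℝ≥0∞} (hN : N ≠ ⊤)
    (h : seminormAlong ϑ s α u ≤ N) (z₀ : Pt d) :
    IsApproxAlong ϑ α N.toReal s (fun w => u (gmul z₀ w)) 0 := by
  refine ⟨zero_mem _, fun R hR w _ τ hτ => ?_⟩
  have hω := hweight_pos hϑ s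
  simp only [map_zero, sub_zero, ← flow_gmul]
  refine (abs_flow_sub_le_of_seminormAlong_le hN h _ _).trans ?_
  gcongr
  calc |τ| ^ (α / hweight ϑ s) ≤ (R ^ hweight ϑ s) ^ (α / hweight ϑ s) :=
        Real.rpow_le_rpow (abs_nonneg _) hτ (div_nonneg hα hω.le)
    _ = R ^ α := by rw [← Real.rpow_mul hR.le, mul_div_cancel₀ _ hω.ne']

lemma IsApproxAlong.mono (h : IsApproxAlong ϑ α K s U F) (hK : K ≤ K') :
    IsApproxAlong ϑ α K' s U F :=
  ⟨h.1, fun R hR w hw τ hτ => (h.2 R hR w hw τ hτ).trans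
    (mul_le_mul_of_nonneg_right hK (Real.rpow_nonneg hR.le _))⟩

lemma IsApprox.nonneg (h : IsApprox ϑ α M U Q) : 0 ≤ M := by
  simpa using (abs_nonneg _).trans (h.2 1 one_pos 0 (zero_mem_hbox zero_le_one))

lemma hasDerivAt_flow_lie (hU : ∀ z, HasLieAt (flow s) U z) (z : Pt d) (τ : ℝ) :
    HasDerivAt (fun r => U (flow s r z)) (lie s U (flow s τ z)) τ := by
  have shifted : HasDerivAt (fun r => U (flow s (r - τ) (flow s τ z)))
      (lie s U (flow s τ z)) τ := by
    refine HasDerivAt.comp_sub_const (f := fun r => U (flow s r (flow s τ z))) τ τ ?_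
    rw [sub_self]
    exact (hU _).hasDerivAt
  simpa only [← flow_add, add_sub_cancel] using shifted

/-- The function `U` minus a polynomial primitive of `Q` along the flow has a small derivative. -/
lemma exists_isApproxAlong_of_isApprox_lie (hϑ : 0 < ϑ) (hU : ∀ z, HasLieAt (flow s) U z)
    (h : IsApprox ϑ (α - hweight ϑ s) M (lie s U) Q) :
    ∃ F, IsApproxAlong ϑ α (M * boxGrowth ϑ ^ (α - hweight ϑ s)) s U F := by
  have hω := hweight_pos hϑ s
  obtain ⟨F, hF, hFQ⟩ := exists_mkDerivation_eq (fun r => (hweight_pos hϑ r).le) hω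
    (isWeightedHomogeneous_fieldCoeff ϑ s) rfl (fieldCoeff_self s) h.1
  rw [sub_add_cancel] at hF
  refine ⟨F, hF, fun R hR w hw τ hτ => ?_⟩
  have hb := zero_lt_one.trans_le (one_le_boxGrowth hϑ)
  have derivative (r : ℝ) : HasDerivAt (fun r => U (flow s r w) - eval (coord (flow s r w)) F)
      (lie s U (flow s r w) - eval (coord (flow s r w)) Q) r := by
    rw [← hFQ]
    exact (hasDerivAt_flow_lie hU w r).sub (hasDerivAt_eval_coord_flow s F w r)
  have mean_value := (convex_closedBall (0 : ℝ) (R ^ hweight ϑ s))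
    |>.norm_image_sub_le_of_norm_hasDerivWithin_le
    (fun r _ => (derivative r).hasDerivWithinAt)
    (fun r hr => h.2 (boxGrowth ϑ * R) (mul_pos hb hR) _
      (flow_mem_hbox hϑ hR hw (mem_closedBall_zero_iff.1 hr)))
    (Metric.mem_closedBall_self (Real.rpow_nonneg hR.le _)) (mem_closedBall_zero_iff.2 hτ)
  rw [flow_zero, sub_zero] at mean_value
  calc _ ≤ M * (boxGrowth ϑ * R) ^ (α - hweight ϑ s) * |τ| := mean_value
    _ ≤ M * (boxGrowth ϑ * R) ^ (α - hweight ϑ s) * R ^ hweight ϑ s := by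
        have := h.nonneg
        gcongr
    _ = M * boxGrowth ϑ ^ (α - hweight ϑ s) * R ^ α := by
        rw [Real.mul_rpow hb.le hR.le, Real.rpow_sub hR]
        field_simp

lemma lie_gmul (s : Coord d) (u : Pt d → ℝ) (z₀ : Pt d) :
    lie s (fun w => u (gmul z₀ w)) = fun w => lie s u (gmul z₀ w) := by
  funext w
  simp only [lie, flow_gmul]

lemma hasLieAt_gmul (hu : ∀ z, HasLieAt (flow s) u z) (z₀ w : Pt d) :
    HasLieAt (flow s) (fun w => u (gmul z₀ w)) w := by
  simpa only [HasLieAt, flow_gmul] using hu (gmul z₀ w)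

lemma hNormAux_ne_top_of_memAux (hu : memAux ϑ n α u) : hNormAux ϑ n α u ≠ ⊤ := by
  cases n with
  | zero => exact hu
  | succ n =>
    rw [memAux] at hu
    split_ifs at hu
    exacts [hu, hu.2.2, hu.2.2, hu.2.2.2.2]

lemma le_add_sum_univ (a : ℝ≥0∞) (g : Fin d → ℝ≥0∞) (i : Fin d) : g i ≤ a + ∑ j, g j :=
  (Finset.single_le_sum_of_canonicallyOrdered (Finset.mem_univ i)).trans le_add_self

lemma seminormAlong_le_hNormAux_zero (hs : IsHorizontal s) (α : ℝ) (u : Pt d → ℝ) :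
    seminormAlong ϑ s α u ≤ hNormAux ϑ 0 α u := by
  rcases s with _ | i | i
  · exact le_self_add
  · exact absurd rfl (hs i)
  · rw [seminormAlong_vc]
    exact le_add_sum_univ _ _ i

lemma seminormAlong_le_or_memAux_lie (hs : IsHorizontal s) (hu : memAux ϑ (n + 1) α u) :
    seminormAlong ϑ s α u ≤ hNormAux ϑ (n + 1) α u ∨
      hweight ϑ s < α ∧ (∀ z, HasLieAt (flow s) u z) ∧ memAux ϑ n (α - hweight ϑ s) (lie s u) ∧
        hNormAux ϑ n (α - hweight ϑ s) (lie s u) ≤ hNormAux ϑ (n + 1) α u := by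
  rw [memAux] at hu
  rw [hNormAux]
  split_ifs at hu ⊢ with h₁ h₂ h₃
  · rcases s with _ | i | i
    · exact .inl le_self_add
    · exact absurd rfl (hs i)
    · exact .inl ((seminormAlong_vc ϑ α i u).trans_le (le_add_sum_univ _ _ i))
  · rcases s with _ | i | i
    · exact .inr ⟨by simpa [hweight, h₃.le] using h₁, hu.1, hu.2.1, le_self_add⟩
    · exact absurd rfl (hs i)
    · exact .inl ((seminormAlong_vc ϑ α i u).trans_le (le_add_sum_univ _ _ i))
  · rcases s with _ | i | i
    · exact .inl le_self_add
    · exact absurd rfl (hs i)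
    · exact .inr ⟨by simpa [hweight, not_lt.1 h₃] using h₁, hu.1 i, hu.2.1 i,
        le_add_sum_univ _ (fun i => hNormAux ϑ n (α - 1) (dv i u)) i⟩
  · have h := max_lt_iff.1 (not_le.1 h₂)
    rcases s with _ | i | i
    · exact .inr ⟨h.2, hu.1, hu.2.1, le_self_add⟩
    · exact absurd rfl (hs i)
    · exact .inr ⟨h.1, hu.2.2.1 i, hu.2.2.2.1 i,
        le_add_sum_univ _ (fun i => hNormAux ϑ n (α - 1) (dv i u)) i⟩

/-- Every function in the space with parameters `n`, `α` is approximated by polynomials at all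
points to homogeneous order `α`, uniformly in terms of its seminorm. -/
def HasApprox (d : ℕ) (ϑ : ℝ) (n : ℕ) (α : ℝ) : Prop :=
  ∃ C > 0, ∀ u : Pt d → ℝ, memAux ϑ n α u → ∀ z₀, ∃ P,
    IsApprox ϑ α (C * (hNormAux ϑ n α u).toReal) (fun w => u (gmul z₀ w)) P

/-- The analogue of `HasApprox` for the increments along the field with index `s`. -/
def HasApproxAlong (ϑ : ℝ) (n : ℕ) (α : ℝ) (s : Coord d) : Prop :=
  ∃ C > 0, ∀ u : Pt d → ℝ, memAux ϑ n α u → ∀ z₀, ∃ F,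
    IsApproxAlong ϑ α (C * (hNormAux ϑ n α u).toReal) s (fun w => u (gmul z₀ w)) F

lemma hasApprox_of_hasApproxAlong (hϑ : 0 < ϑ) (hα : 0 < α)
    (h : ∀ s : Coord d, IsHorizontal s → HasApproxAlong ϑ n α s) : HasApprox d ϑ n α := by
  have h' (s : Coord d) : ∃ C > 0, IsHorizontal s → ∀ u : Pt d → ℝ, memAux ϑ n α u → ∀ z₀, ∃ F,
      IsApproxAlong ϑ α (C * (hNormAux ϑ n α u).toReal) s (fun w => u (gmul z₀ w)) F := by
    by_cases hs : IsHorizontal s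
    · exact (h s hs).imp fun C hC => ⟨hC.1, fun _ => hC.2⟩
    · exact ⟨1, one_pos, fun h => absurd h hs⟩
  choose C hC hF using h'
  have hb := zero_lt_one.trans_le (one_le_boxGrowth hϑ)
  refine ⟨(∑ i ∈ Finset.range (1 + 5 * d), (boxGrowth ϑ ^ α) ^ i) * ∑ s, C s,
    mul_pos (geom_sum_pos (by positivity) (by omega))
      (Finset.sum_pos (fun s _ => hC s) Finset.univ_nonempty), fun u hu z₀ => ?_⟩
  choose! F hF using fun s hs => hF s hs u hu z₀
  rw [mul_assoc]
  refine exists_isApprox_of_isApproxAlong hϑ hα fun s hs => (hF s hs).mono ?_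
  gcongr
  exact Finset.single_le_sum (fun s _ => (hC s).le) (Finset.mem_univ s)

lemma hasApproxAlong_zero (hϑ : 0 < ϑ) (hα : 0 < α) (hs : IsHorizontal s) :
    HasApproxAlong ϑ 0 α s := by
  refine ⟨1, one_pos, fun u hu z₀ => ⟨0, ?_⟩⟩
  rw [one_mul]
  exact isApproxAlong_zero_of_seminormAlong_le hϑ hα.le (hNormAux_ne_top_of_memAux hu)
    (seminormAlong_le_hNormAux_zero hs α u) z₀

lemma hasApproxAlong_succ (hϑ : 0 < ϑ) (hα : 0 < α) (hs : IsHorizontal s)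
    (h : hweight ϑ s < α → HasApprox d ϑ n (α - hweight ϑ s)) : HasApproxAlong ϑ (n + 1) α s := by
  have hb := zero_lt_one.trans_le (one_le_boxGrowth hϑ)
  obtain ⟨C, hC, hlie⟩ : ∃ C > 0, hweight ϑ s < α → ∀ u : Pt d → ℝ,
      memAux ϑ n (α - hweight ϑ s) u → ∀ z₀, ∃ P, IsApprox ϑ (α - hweight ϑ s)
        (C * (hNormAux ϑ n (α - hweight ϑ s) u).toReal) (fun w => u (gmul z₀ w)) P := by
    by_cases hsα : hweight ϑ s < α
    · exact (h hsα).imp fun C hC => ⟨hC.1, fun _ => hC.2⟩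
    · exact ⟨1, one_pos, fun h => absurd h hsα⟩
  refine ⟨1 + C * boxGrowth ϑ ^ (α - hweight ϑ s), by positivity, fun u hu z₀ => ?_⟩
  have hN := hNormAux_ne_top_of_memAux hu
  rcases seminormAlong_le_or_memAux_lie hs hu with hsemi | ⟨hsα, hu', hmem, hle⟩
  · refine ⟨0, (isApproxAlong_zero_of_seminormAlong_le hϑ hα.le hN hsemi z₀).mono ?_⟩
    exact le_mul_of_one_le_left ENNReal.toReal_nonneg (le_add_of_nonneg_right (by positivity))
  · obtain ⟨Q, hQ⟩ := hlie hsα _ hmem z₀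
    rw [← lie_gmul] at hQ
    obtain ⟨F, hF⟩ := exists_isApproxAlong_of_isApprox_lie hϑ (hasLieAt_gmul hu' z₀) hQ
    refine ⟨F, hF.mono ?_⟩
    calc _ ≤ C * (hNormAux ϑ (n + 1) α u).toReal * boxGrowth ϑ ^ (α - hweight ϑ s) := by
          gcongr
      _ = C * boxGrowth ϑ ^ (α - hweight ϑ s) * (hNormAux ϑ (n + 1) α u).toReal := by ring
      _ ≤ _ := by
          gcongr
          exact le_add_of_nonneg_left zero_le_one

theorem hasApprox (hϑ : 0 < ϑ) (n : ℕ) (hα : 0 < α) : HasApprox d ϑ n α := by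
  induction n generalizing α with
  | zero => exact hasApprox_of_hasApproxAlong hϑ hα fun s => hasApproxAlong_zero hϑ hα
  | succ n ih =>
    exact hasApprox_of_hasApproxAlong hϑ hα fun s hs =>
      hasApproxAlong_succ hϑ hα hs fun hsα => ih (sub_pos.2 hsα)

end Holder

end IntrinsicTaylor

/-- Intrinsic Taylor formula: for every `α > 0` there is `c > 0`, depending only on `d`, `ϑ`
and `α`, such that for `u ∈ C^α`,
`|u(z) − T_α u(z₀; z)| ≤ c ‖u‖_{C^α} ‖z₀⁻¹ ∘ z‖^α` for all `z, z₀`. -/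
theorem intrinsic_taylor_formula (d : ℕ) (hd : 1 ≤ d) (ϑ : ℝ) (hϑ : 0 < ϑ)
    (α : ℝ) (hα : 0 < α) :
    ∃ c : ℝ, 0 < c ∧ ∀ u : Pt d → ℝ, IsHolder ϑ α u →
      ∀ z z₀ : Pt d,
        |u z - taylorPoly ϑ α u z₀ z| ≤
          c * (holderNorm ϑ α u).toReal * hnorm ϑ (gmul (ginv z₀) z) ^ α := by
  obtain ⟨c, hc, happrox⟩ := IntrinsicTaylor.hasApprox (d := d) hϑ (fuel ϑ α) hα
  refine ⟨c, hc, fun u hu z z₀ => ?_⟩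
  choose A hA using happrox u hu
  have family : IntrinsicTaylor.IsApproxFamily ϑ α u A := ⟨_, hA⟩
  rw [family.taylorPoly_eq hϑ]
  have hnorm_nonneg : 0 ≤ hnorm ϑ (gmul (ginv z₀) z) := by
    unfold hnorm
    positivity
  refine IntrinsicTaylor.le_mul_rpow_of_forall_gt hα.le fun R hR => ?_
  simpa only [IntrinsicTaylor.gmul_gmul_ginv, holderNorm] using
    (hA z₀).2 R (hnorm_nonneg.trans_lt hR) _ (IntrinsicTaylor.mem_hbox_of_hnorm_le hϑ hR.le)

end
end
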